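/- arXiv:1511.01041 — 3 statements merged into one kernel-verified Lean document; each statement's English description precedes it below -/
import Mathlib

section
/- Let p ∈ ℕ, let M₀ ⊆ ℝ^p be open, and let m be a real number. Give the extra variable t ∈ ℝ the weight 1, so the augmented dilations act by β_λ(η,t) = (δ_λ(η), λt) for λ > 0. Let B : M₀ × ℝⁿ × ℝ → ℂ be smooth and suppose that for every λ > 0 the function G_λ(x,η,t) := B(x, δ_λ(η), λt) − λ^m · B(x,η,t) is fibrewise Schwartz in (η,t), locally uniformly with all derivatives in x; that is, for every compact K ⊆ M₀, all multi-indices a, b ∈ ℕⁿ and c ∈ ℕ^p, and all j, k ∈ ℕ, one has sup over x ∈ K, η ∈ ℝⁿ, t ∈ ℝ of |η^a t^j ∂_η^b ∂_x^c ∂_t^k G_λ(x,η,t)| < ∞. Then for every compact K ⊆ M₀, all multi-indices a, b ∈ ℕⁿ and c ∈ ℕ^p, and every k ∈ ℕ there is a constant C ≥ 0 such that |η^a ∂_η^b ∂_x^c ∂_t^k B(x,η,t)| ≤ C (1 + ‖η‖_H + |t|)^{m + |a|_H − |b|_H − k} for all (x,η,t) ∈ K × ℝⁿ × ℝ. -/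
/-!
Only the dilation by `2` is used. Put `ρ(η,t) = ‖η‖_H + |t|`, which satisfies `ρ ∘ β₂ = 2 ρ`, and let
`F = ∂_η^b ∂_x^c ∂_t^k B`, `s = |b|_H + k`, `e = m - s`. Each coordinate vector is an eigenvector of
the linear map `(x, η, t) ↦ (x, β₂(η, t))`, so differentiating `G₂` gives (`DilRel.mpd`)
`2^s F(β₂ z) = 2^m F(z) + (∂_η^b ∂_x^c ∂_t^k G₂)(z)`, that is `|F(β₂ z)| ≤ 2^e |F(z)| + |g(z)|`
with `g` rapidly decaying: `|g| ≤ C₁ ρ^(-N)` on `ρ ≥ 1`, for any `N` (`decay_of_monomials`). We take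
`-N < e`. On the compact shell `ρ ≤ 2` the continuous function `F` is bounded, and the improved bound
`|F| ≤ A ρ^e - D ρ^(-N)` propagates from `ρ ≤ 2^(j+1)` to `ρ ≤ 2^(j+2)` as soon as
`D (2^e - 2^(-N)) ≥ C₁` (`dyadic_bound`). Finally `|η^a| ≤ ‖η‖_H^{|a|_H}`.
-/


open scoped BigOperators

/-- Graded dilation `δ_λ` on `ℝⁿ` with integer weights `d`. -/
noncomputable def dil {n : ℕ} (d : Fin n → ℕ) (lam : ℝ) (η : Fin n → ℝ) : Fin n → ℝ :=
  fun i => lam ^ (d i) * η i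

/-- Homogeneous norm `‖η‖_H = max_i |η_i|^(1/d_i)`. -/
noncomputable def hnorm {n : ℕ} (d : Fin n → ℕ) (η : Fin n → ℝ) : ℝ :=
  ⨆ i, |η i| ^ ((d i : ℝ)⁻¹)

/-- Homogeneous order `|b|_H = ∑ i, b i * d i` of a multi-index. -/
def horder {n : ℕ} (d : Fin n → ℕ) (b : Fin n → ℕ) : ℕ := ∑ i, b i * d i

/-- Monomial `η^a = ∏ i, η i ^ a i`. -/
def mono {n : ℕ} (a : Fin n → ℕ) (η : Fin n → ℝ) : ℝ := ∏ i, η i ^ a i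

/-- Partial derivative in the `i`-th base (`x`) direction, for functions on
`M₀ × ℝⁿ × ℝ`. -/
noncomputable def pdX {p n : ℕ} (i : Fin p)
    (f : (Fin p → ℝ) × (Fin n → ℝ) × ℝ → ℂ) :
    (Fin p → ℝ) × (Fin n → ℝ) × ℝ → ℂ :=
  fun z => fderiv ℝ f z (Pi.single i 1, 0, 0)

/-- Partial derivative in the `i`-th fibre (`η`) direction. -/
noncomputable def pdEta {p n : ℕ} (i : Fin n)
    (f : (Fin p → ℝ) × (Fin n → ℝ) × ℝ → ℂ) :
    (Fin p → ℝ) × (Fin n → ℝ) × ℝ → ℂ :=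
  fun z => fderiv ℝ f z (0, Pi.single i 1, 0)

/-- Partial derivative in the `t` direction. -/
noncomputable def pdT {p n : ℕ}
    (f : (Fin p → ℝ) × (Fin n → ℝ) × ℝ → ℂ) :
    (Fin p → ℝ) × (Fin n → ℝ) × ℝ → ℂ :=
  fun z => fderiv ℝ f z (0, 0, 1)

/-- Iterated mixed partial derivative `∂_η^b ∂_x^c ∂_t^k`. -/
noncomputable def mpdXEtaT {p n : ℕ} (b : Fin n → ℕ) (c : Fin p → ℕ) (k : ℕ)
    (f : (Fin p → ℝ) × (Fin n → ℝ) × ℝ → ℂ) :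
    (Fin p → ℝ) × (Fin n → ℝ) × ℝ → ℂ :=
  ((List.finRange n).foldr (fun i g => (pdEta i)^[b i] ∘ g) id)
    (((List.finRange p).foldr (fun i g => (pdX i)^[c i] ∘ g) id)
      ((pdT)^[k] f))

/-! ### Differentiating the dilation relation -/

/-- `f` is smooth on `U`, and `g` is the defect `2^w f ∘ L - c f` on `U`. For `w = 0` this is the
defect from homogeneity of `f`; differentiating along an eigenvector of `L` changes only `w`. -/
def DilRel {E : Type*} [NormedAddCommGroup E] [NormedSpace ℝ E] (U : Set E) (L : E →L[ℝ] E) (c : ℂ)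
    (w : ℕ) (f g : E → ℂ) : Prop :=
  ContDiffOn ℝ (⊤ : ℕ∞) f U ∧ ∀ z ∈ U, g z = (2 : ℂ) ^ w * f (L z) - c * f z

theorem DilRel.dir {E : Type*} [NormedAddCommGroup E] [NormedSpace ℝ E] {U : Set E}
    (hU : IsOpen U) {L : E →L[ℝ] E} (hL : ∀ z ∈ U, L z ∈ U) {c : ℂ} {w : ℕ} {f g : E → ℂ}
    (h : DilRel U L c w f g) (v : E) (r : ℕ) (hv : L v = (2 : ℝ) ^ r • v) :
    DilRel U L c (w + r) (fun z => fderiv ℝ f z v) (fun z => fderiv ℝ g z v) := by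
  obtain ⟨hf, hg⟩ := h
  refine ⟨?_, fun z hz => ?_⟩
  · have h1 : ContDiffOn ℝ (⊤ : ℕ∞) (fderiv ℝ f) U := hf.fderiv_of_isOpen hU (by simp)
    exact h1.clm_apply contDiffOn_const
  · have hd : ∀ y ∈ U, HasFDerivAt f (fderiv ℝ f y) y := fun y hy =>
      (((hf y hy).contDiffAt (hU.mem_nhds hy)).differentiableAt (by simp)).hasFDerivAt
    have h1 : HasFDerivAt (fun z => (2 : ℂ) ^ w * f (L z) - c * f z)
        ((2 : ℂ) ^ w • ((fderiv ℝ f (L z)).comp L) - c • fderiv ℝ f z) z :=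
      (((hd _ (hL z hz)).comp z L.hasFDerivAt).const_mul _).sub ((hd z hz).const_mul c)
    have h2 : g =ᶠ[nhds z] (fun z => (2 : ℂ) ^ w * f (L z) - c * f z) := by
      filter_upwards [hU.mem_nhds hz] with y hy using hg y hy
    simp only [h2.fderiv_eq, h1.fderiv]
    simp only [sub_apply, smul_apply,
      ContinuousLinearMap.comp_apply, hv, map_smul, smul_eq_mul, Complex.real_smul]
    push_cast
    ring

theorem DilRel.iter {E : Type*} [NormedAddCommGroup E] [NormedSpace ℝ E] {U : Set E}
    (hU : IsOpen U) {L : E →L[ℝ] E} (hL : ∀ z ∈ U, L z ∈ U) {c : ℂ} {w : ℕ} {f g : E → ℂ}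
    (h : DilRel U L c w f g) (v : E) (r : ℕ) (hv : L v = (2 : ℝ) ^ r • v) (k : ℕ) :
    DilRel U L c (w + k * r) ((fun f z => fderiv ℝ f z v)^[k] f)
      ((fun f z => fderiv ℝ f z v)^[k] g) := by
  induction k with
  | zero => simpa using h
  | succ k ih =>
    simp only [Function.iterate_succ_apply']
    have := ih.dir hU hL v r hv
    rwa [show w + (k + 1) * r = w + k * r + r by ring]

theorem DilRel.foldr {E ι : Type*} [NormedAddCommGroup E] [NormedSpace ℝ E] {U : Set E}
    (hU : IsOpen U) {L : E →L[ℝ] E} (hL : ∀ z ∈ U, L z ∈ U) {c : ℂ} {w : ℕ} {f g : E → ℂ}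
    (h : DilRel U L c w f g) (v : ι → E) (r : ι → ℕ) (hv : ∀ i, L (v i) = (2 : ℝ) ^ r i • v i)
    (b : ι → ℕ) (l : List ι) :
    DilRel U L c (w + (l.map fun i => b i * r i).sum)
      (l.foldr (fun i G => (fun f z => fderiv ℝ f z (v i))^[b i] ∘ G) id f)
      (l.foldr (fun i G => (fun f z => fderiv ℝ f z (v i))^[b i] ∘ G) id g) := by
  induction l with
  | nil => simpa using h
  | cons i l ih =>
    simp only [List.foldr_cons, Function.comp_apply, List.map_cons, List.sum_cons]
    have := ih.iter hU hL (v i) (r i) (hv i) (b i)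
    rwa [show w + (b i * r i + (l.map fun i => b i * r i).sum)
      = w + (l.map fun i => b i * r i).sum + b i * r i by ring]

/-- The augmented dilation by `2`, acting trivially on the base, as a continuous linear map. -/
noncomputable def dilL {n : ℕ} (p : ℕ) (d : Fin n → ℕ) :
    ((Fin p → ℝ) × (Fin n → ℝ) × ℝ) →L[ℝ] ((Fin p → ℝ) × (Fin n → ℝ) × ℝ) :=
  (ContinuousLinearMap.id ℝ (Fin p → ℝ)).prodMap
    ((ContinuousLinearMap.pi fun i => (2 : ℝ) ^ d i • ContinuousLinearMap.proj (R := ℝ) i).prodMap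
      ((2 : ℝ) • ContinuousLinearMap.id ℝ ℝ))

theorem dilL_apply {n p : ℕ} (d : Fin n → ℕ) (z : (Fin p → ℝ) × (Fin n → ℝ) × ℝ) :
    dilL p d z = (z.1, dil d 2 z.2.1, 2 * z.2.2) := by
  refine Prod.ext rfl (Prod.ext ?_ ?_)
  · ext i
    simp [dilL, dil]
  · simp [dilL]

theorem DilRel.mpd {n p : ℕ} (d : Fin n → ℕ) {U : Set ((Fin p → ℝ) × (Fin n → ℝ) × ℝ)}
    (hU : IsOpen U) (hL : ∀ z ∈ U, dilL p d z ∈ U) {c' : ℂ}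
    {f g : (Fin p → ℝ) × (Fin n → ℝ) × ℝ → ℂ}
    (h : DilRel U (dilL p d) c' 0 f g) (b : Fin n → ℕ) (c : Fin p → ℕ) (k : ℕ) :
    DilRel U (dilL p d) c' (horder d b + k) (mpdXEtaT b c k f) (mpdXEtaT b c k g) := by
  have h1 := h.iter hU hL (0, 0, 1) 1 (by
    rw [dilL_apply]; ext <;> simp [dil]) k
  have h2 := h1.foldr hU hL (fun i : Fin p => (Pi.single i 1, 0, 0)) (fun _ => 0) (by
    intro i; rw [dilL_apply]; ext <;> simp [dil]) c (List.finRange p)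
  have h3 := h2.foldr hU hL (fun i : Fin n => (0, Pi.single i 1, 0)) d (by
    intro i; rw [dilL_apply]
    refine Prod.ext (by simp) (Prod.ext ?_ (by simp))
    ext j
    by_cases hj : j = i
    · subst hj; simp [dil]
    · simp [dil, hj]) b (List.finRange n)
  have e : 0 + k * 1 + ((List.finRange p).map fun i => c i * 0).sum
      + ((List.finRange n).map fun i => b i * d i).sum = horder d b + k := by
    simp [horder, Fin.sum_univ_def, add_comm]
  rw [e] at h3
  exact h3

/-! ### The homogeneous norm -/

theorem hnorm_nonneg {n : ℕ} (d : Fin n → ℕ) (η : Fin n → ℝ) : 0 ≤ hnorm d η :=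
  Real.iSup_nonneg fun _ => Real.rpow_nonneg (abs_nonneg _) _

theorem abs_le_hnorm_pow {n : ℕ} (d : Fin n → ℕ) (hd : ∀ i, 1 ≤ d i) (η : Fin n → ℝ) (i : Fin n) :
    |η i| ≤ hnorm d η ^ d i := by
  have h1 : |η i| ^ ((d i : ℝ)⁻¹) ≤ hnorm d η :=
    le_ciSup (f := fun i => |η i| ^ ((d i : ℝ)⁻¹)) (Set.finite_range _).bddAbove i
  calc |η i| = (|η i| ^ ((d i : ℝ)⁻¹)) ^ d i :=
        (Real.rpow_inv_natCast_pow (abs_nonneg _) (by have := hd i; omega)).symm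
    _ ≤ _ := pow_le_pow_left₀ (Real.rpow_nonneg (abs_nonneg _) _) h1 _

theorem hnorm_dil {n : ℕ} (d : Fin n → ℕ) (hd : ∀ i, 1 ≤ d i) (lam : ℝ) (hl : 0 ≤ lam)
    (η : Fin n → ℝ) : hnorm d (dil d lam η) = lam * hnorm d η := by
  rw [hnorm, hnorm, Real.mul_iSup_of_nonneg hl]
  congr 1
  ext i
  rw [dil, abs_mul, abs_of_nonneg (pow_nonneg hl _),
    Real.mul_rpow (pow_nonneg hl _) (abs_nonneg _),
    Real.pow_rpow_inv_natCast hl (by have := hd i; omega)]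

theorem abs_mono_le {n : ℕ} (d : Fin n → ℕ) (hd : ∀ i, 1 ≤ d i) (a : Fin n → ℕ) (η : Fin n → ℝ) :
    |mono a η| ≤ hnorm d η ^ horder d a := by
  rw [mono, Finset.abs_prod, horder, ← Finset.prod_pow_eq_pow_sum]
  refine Finset.prod_le_prod (fun i _ => abs_nonneg _) fun i _ => ?_
  rw [abs_pow, mul_comm, pow_mul]
  exact pow_le_pow_left₀ (abs_nonneg _) (abs_le_hnorm_pow d hd η i) _

/-- Comparison of the homogeneous gauge with the coordinates, which turns bounds on coordinate
powers into bounds on powers of the gauge. -/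
theorem gauge_cases {n : ℕ} (d : Fin n → ℕ) (hd : ∀ i, 1 ≤ d i) (η : Fin n → ℝ) (t : ℝ) :
    hnorm d η + |t| ≤ 2 ∨ hnorm d η + |t| ≤ 2 * |t| ∨ ∃ i, hnorm d η + |t| ≤ 2 * |η i| := by
  by_cases h : hnorm d η ≤ |t|
  · right; left; linarith
  push Not at h
  have hpos : 0 < hnorm d η := lt_of_le_of_lt (abs_nonneg t) h
  have hne : Nonempty (Fin n) := by
    by_contra hn
    rw [not_nonempty_iff] at hn
    simp [hnorm] at hpos
  obtain ⟨i, hi⟩ := exists_eq_ciSup_of_finite (f := fun i => |η i| ^ ((d i : ℝ)⁻¹))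
  have hi' : |η i| ^ ((d i : ℝ)⁻¹) = hnorm d η := hi
  have hd1 : (1 : ℝ) ≤ d i := by exact_mod_cast hd i
  rcases le_total |η i| 1 with h1 | h1
  · left
    have : |η i| ^ ((d i : ℝ)⁻¹) ≤ 1 := Real.rpow_le_one (abs_nonneg _) h1 (by positivity)
    linarith
  · right; right
    refine ⟨i, ?_⟩
    have : |η i| ^ ((d i : ℝ)⁻¹) ≤ |η i| ^ (1 : ℝ) :=
      Real.rpow_le_rpow_of_exponent_le h1 (inv_le_one_of_one_le₀ hd1)
    rw [Real.rpow_one] at this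
    linarith

theorem decay_of_monomials {n p : ℕ} (d : Fin n → ℕ) (hd : ∀ i, 1 ≤ d i) (K : Set (Fin p → ℝ))
    (g : (Fin p → ℝ) × (Fin n → ℝ) × ℝ → ℂ)
    (hg : ∀ (a : Fin n → ℕ) (j : ℕ), ∃ C : ℝ, ∀ x ∈ K, ∀ (η : Fin n → ℝ) (t : ℝ),
      ‖(mono a η : ℂ) * (t : ℂ) ^ j * g (x, η, t)‖ ≤ C) (N : ℕ) :
    ∃ C : ℝ, 0 ≤ C ∧ ∀ x ∈ K, ∀ (η : Fin n → ℝ) (t : ℝ),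
      (hnorm d η + |t|) ^ N * ‖g (x, η, t)‖ ≤ C := by
  obtain ⟨C0, h0⟩ := hg 0 0
  obtain ⟨Ct, ht⟩ := hg 0 N
  choose Ci hi using fun i : Fin n => hg (Pi.single i N) 0
  refine ⟨2 ^ N * (|C0| + |Ct| + ∑ i, |Ci i|), by positivity, fun x hx η t => ?_⟩
  have h0' : ‖g (x, η, t)‖ ≤ |C0| := by
    simpa [mono] using (h0 x hx η t).trans (le_abs_self _)
  have ht' : |t| ^ N * ‖g (x, η, t)‖ ≤ |Ct| := by
    simpa [mono] using (ht x hx η t).trans (le_abs_self _)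
  have hi' : ∀ i, |η i| ^ N * ‖g (x, η, t)‖ ≤ |Ci i| := fun i => by
    have hm : mono (Pi.single i N) η = η i ^ N := by
      rw [mono, Finset.prod_eq_single i]
      · simp
      · intro j _ hj; simp [hj]
      · simp
    have := (hi i x hx η t).trans (le_abs_self _)
    rw [hm] at this
    simpa using this
  have hS : 0 ≤ ∑ i, |Ci i| := by positivity
  have key : ∀ y C : ℝ, 0 ≤ y → hnorm d η + |t| ≤ 2 * y → y ^ N * ‖g (x, η, t)‖ ≤ C →
      C ≤ |C0| + |Ct| + ∑ i, |Ci i| →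
      (hnorm d η + |t|) ^ N * ‖g (x, η, t)‖ ≤ 2 ^ N * (|C0| + |Ct| + ∑ i, |Ci i|) := by
    intro y C hy h1 h2 h3
    calc (hnorm d η + |t|) ^ N * ‖g (x, η, t)‖ ≤ (2 * y) ^ N * ‖g (x, η, t)‖ := by
          have := hnorm_nonneg d η
          gcongr
      _ = 2 ^ N * (y ^ N * ‖g (x, η, t)‖) := by ring
      _ ≤ _ := by gcongr; exact h2.trans h3
  have e0 := abs_nonneg C0
  have et := abs_nonneg Ct
  rcases gauge_cases d hd η t with h | h | ⟨i, h⟩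
  · exact key 1 |C0| zero_le_one (by linarith) (by simpa using h0') (by linarith)
  · exact key |t| |Ct| (abs_nonneg _) h ht' (by linarith)
  · refine key |η i| |Ci i| (abs_nonneg _) h (hi' i) ?_
    have := Finset.single_le_sum (f := fun i => |Ci i|) (fun i _ => abs_nonneg _)
      (Finset.mem_univ i)
    linarith

/-! ### The dyadic iteration -/

theorem min_le_rpow (e y : ℝ) (h1 : 1 ≤ y) (h2 : y ≤ 2) : min 1 ((2 : ℝ) ^ e) ≤ y ^ e := by
  rcases le_total 0 e with he | he
  · exact (min_le_left _ _).trans (Real.one_le_rpow h1 he)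
  · exact (min_le_right _ _).trans (Real.rpow_le_rpow_of_nonpos (by linarith) h2 he)

/-- A function that under `ρ ↦ 2ρ` grows by at most the factor `2^e`, up to an error `ρ^(-N)` of
lower order, is `O((1 + ρ)^e)`. The map `h` plays the role of dilation by `1/2`. -/
theorem dyadic_bound {Z : Type*} (S : Set Z) (ρ : Z → ℝ) (h : Z → Z) (F : Z → ℝ)
    (e C₁ M : ℝ) (N : ℕ) (hN : -(N : ℝ) < e) (hC₁ : 0 ≤ C₁) (hM : 0 ≤ M)
    (hS : ∀ z ∈ S, h z ∈ S) (hρ : ∀ z, 0 ≤ ρ z) (hhalf : ∀ z, ρ (h z) = ρ z / 2)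
    (hbase : ∀ z ∈ S, ρ z ≤ 2 → F z ≤ M)
    (hstep : ∀ z ∈ S, 1 ≤ ρ (h z) →
      F z ≤ (2 : ℝ) ^ e * F (h z) + C₁ * ρ (h z) ^ (-(N : ℝ))) :
    ∃ C : ℝ, 0 ≤ C ∧ ∀ z ∈ S, F z ≤ C * (1 + ρ z) ^ e := by
  set κ := min 1 ((2 : ℝ) ^ e) with hκ
  have hκ0 : 0 < κ := lt_min one_pos (by positivity)
  have hgap : 0 < (2 : ℝ) ^ e - 2 ^ (-(N : ℝ)) :=
    sub_pos.2 (Real.rpow_lt_rpow_of_exponent_lt one_lt_two hN)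
  set D := C₁ / ((2 : ℝ) ^ e - 2 ^ (-(N : ℝ))) with hD
  have hD0 : 0 ≤ D := div_nonneg hC₁ hgap.le
  have hDC : D * (2 : ℝ) ^ e - D * 2 ^ (-(N : ℝ)) = C₁ := by
    rw [← mul_sub, hD, div_mul_cancel₀ _ hgap.ne']
  set A := (M + D) / κ with hA
  have hA0 : 0 ≤ A := by positivity
  have hAκ : A * κ = M + D := by rw [hA, div_mul_cancel₀ _ hκ0.ne']
  have main : ∀ j : ℕ, ∀ z ∈ S, 1 ≤ ρ z → ρ z ≤ 2 ^ (j + 1) →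
      F z ≤ A * ρ z ^ e - D * ρ z ^ (-(N : ℝ)) := by
    have base : ∀ z ∈ S, 1 ≤ ρ z → ρ z ≤ 2 → F z ≤ A * ρ z ^ e - D * ρ z ^ (-(N : ℝ)) := by
      intro z hz h1 h2
      have i1 : A * κ ≤ A * ρ z ^ e := by gcongr; exact min_le_rpow e _ h1 h2
      have i2 : D * ρ z ^ (-(N : ℝ)) ≤ D * 1 := by
        gcongr
        exact Real.rpow_le_one_of_one_le_of_nonpos h1 (by simp)
      have := hbase z hz h2
      linarith
    intro j
    induction j with
    | zero => intro z hz h1 h2; exact base z hz h1 (by simpa using h2)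
    | succ j ih =>
      intro z hz h1 h2
      rcases le_total (ρ z) 2 with h3 | h3
      · exact base z hz h1 h3
      · have k1 : 1 ≤ ρ (h z) := by rw [hhalf]; linarith
        have k2 : ρ (h z) ≤ 2 ^ (j + 1) := by rw [hhalf]; rw [pow_succ] at h2; linarith
        have k3 := ih (h z) (hS z hz) k1 k2
        have k4 := hstep z hz k1
        have k5 : ρ z = 2 * ρ (h z) := by rw [hhalf]; ring
        have k6 : (2 : ℝ) ^ e * F (h z) ≤
            2 ^ e * (A * ρ (h z) ^ e - D * ρ (h z) ^ (-(N : ℝ))) := by gcongr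
        rw [k5, Real.mul_rpow zero_le_two (hρ _), Real.mul_rpow zero_le_two (hρ _)]
        rw [← hDC] at k4
        linarith
  have hκ1 : κ ≤ 1 := min_le_left _ _
  refine ⟨A / κ, by positivity, fun z hz => ?_⟩
  rcases le_total (ρ z) 1 with h1 | h1
  · have i1 := min_le_rpow e (1 + ρ z) (by linarith [hρ z]) (by linarith)
    have i2 : M ≤ A := by
      have : A * κ ≤ A * 1 := by gcongr
      linarith
    calc F z ≤ M := hbase z hz (by linarith)
      _ ≤ A := i2
      _ = A / κ * κ := (div_mul_cancel₀ _ hκ0.ne').symm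
      _ ≤ _ := by gcongr
  · have hp : 0 < ρ z := by linarith
    obtain ⟨j, hj⟩ := pow_unbounded_of_one_lt (ρ z) (one_lt_two (α := ℝ))
    have hj' : ρ z ≤ 2 ^ (j + 1) := hj.le.trans (pow_le_pow_right₀ one_le_two (Nat.le_succ j))
    have i1 := main j z hz h1 hj'
    have i2 : 0 ≤ D * ρ z ^ (-(N : ℝ)) := by positivity
    -- The quotient `(1 + ρ) / ρ` lies in `[1, 2]`, so `ρ ^ e` and `(1 + ρ) ^ e` are comparable.
    have i3 : κ ≤ ((1 + ρ z) / ρ z) ^ e := min_le_rpow e _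
      (by rw [le_div_iff₀ hp]; linarith) (by rw [div_le_iff₀ hp]; linarith)
    calc F z ≤ A * ρ z ^ e := by linarith
      _ = A / κ * (κ * ρ z ^ e) := by field_simp
      _ ≤ A / κ * (((1 + ρ z) / ρ z) ^ e * ρ z ^ e) := by gcongr
      _ = A / κ * (1 + ρ z) ^ e := by
        rw [← Real.mul_rpow (by positivity) hp.le, div_mul_cancel₀ _ hp.ne']

theorem bounded_on_shell {n p : ℕ} (d : Fin n → ℕ) (hd : ∀ i, 1 ≤ d i) (K : Set (Fin p → ℝ))
    (hK : IsCompact K) (F : (Fin p → ℝ) × (Fin n → ℝ) × ℝ → ℂ)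
    (hF : ContinuousOn F (K ×ˢ (Set.univ : Set ((Fin n → ℝ) × ℝ)))) :
    ∃ M : ℝ, 0 ≤ M ∧ ∀ x ∈ K, ∀ (η : Fin n → ℝ) (t : ℝ), hnorm d η + |t| ≤ 2 →
      ‖F (x, η, t)‖ ≤ M := by
  have hc : IsCompact (K ×ˢ ((Set.univ.pi fun i => Set.Icc (-(2 : ℝ) ^ d i) (2 ^ d i)) ×ˢ
      Set.Icc (-2 : ℝ) 2)) :=
    hK.prod ((isCompact_univ_pi fun _ => isCompact_Icc).prod isCompact_Icc)
  obtain ⟨M, hM⟩ := hc.exists_bound_of_continuousOn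
    (hF.mono (Set.prod_mono_right (Set.subset_univ _)))
  refine ⟨|M|, abs_nonneg _, fun x hx η t h => (hM _ ⟨hx, ?_, ?_⟩).trans (le_abs_self _)⟩
  · intro i _
    refine abs_le.1 ((abs_le_hnorm_pow d hd η i).trans ?_)
    exact pow_le_pow_left₀ (hnorm_nonneg d η) (by linarith [abs_nonneg t]) _
  · exact abs_le.1 (by linarith [hnorm_nonneg d η])

theorem stmt1 {n p : ℕ} (d : Fin n → ℕ) (hd : ∀ i, 1 ≤ d i)
    (M₀ : Set (Fin p → ℝ)) (hM₀ : IsOpen M₀) (m : ℝ)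
    (B : (Fin p → ℝ) × (Fin n → ℝ) × ℝ → ℂ)
    (hB : ContDiffOn ℝ (⊤ : ℕ∞) B (M₀ ×ˢ (Set.univ : Set ((Fin n → ℝ) × ℝ))))
    (hG : ∀ lam : ℝ, 0 < lam →
      ∀ K : Set (Fin p → ℝ), IsCompact K → K ⊆ M₀ →
      ∀ (a b : Fin n → ℕ) (c : Fin p → ℕ) (j k : ℕ),
        ∃ C : ℝ, ∀ x ∈ K, ∀ (η : Fin n → ℝ) (t : ℝ),
          ‖(mono a η : ℂ) * (t : ℂ) ^ j *
            mpdXEtaT b c k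
              (fun z => B (z.1, dil d lam z.2.1, lam * z.2.2)
                - ((lam ^ m : ℝ) : ℂ) * B z) (x, η, t)‖ ≤ C) :
    ∀ K : Set (Fin p → ℝ), IsCompact K → K ⊆ M₀ →
    ∀ (a b : Fin n → ℕ) (c : Fin p → ℕ) (k : ℕ),
      ∃ C : ℝ, 0 ≤ C ∧ ∀ x ∈ K, ∀ (η : Fin n → ℝ) (t : ℝ),
        ‖(mono a η : ℂ) * mpdXEtaT b c k B (x, η, t)‖ ≤
          C * (1 + hnorm d η + |t|) ^
            (m + (horder d a : ℝ) - (horder d b : ℝ) - (k : ℝ)) := by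
  intro K hK hKM a b c k
  set U : Set ((Fin p → ℝ) × (Fin n → ℝ) × ℝ) := M₀ ×ˢ Set.univ with hU
  have hUo : IsOpen U := hM₀.prod isOpen_univ
  have hL : ∀ z ∈ U, dilL p d z ∈ U := fun z hz => by
    rw [dilL_apply]
    exact ⟨hz.1, Set.mem_univ _⟩
  have h0 : DilRel U (dilL p d) (((2 : ℝ) ^ m : ℝ) : ℂ) 0 B
      (fun z => B (z.1, dil d 2 z.2.1, 2 * z.2.2) - (((2 : ℝ) ^ m : ℝ) : ℂ) * B z) :=
    ⟨hB, fun z _ => by simp [dilL_apply]⟩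
  obtain ⟨hFs, hrel⟩ := h0.mpd d hUo hL b c k
  set g := mpdXEtaT b c k
    (fun z => B (z.1, dil d 2 z.2.1, 2 * z.2.2) - (((2 : ℝ) ^ m : ℝ) : ℂ) * B z) with hg
  set F := mpdXEtaT b c k B with hF
  set s := horder d b + k with hs
  set e : ℝ := m - s with he
  obtain ⟨N, hN⟩ := exists_nat_gt (-e)
  obtain ⟨C₁, hC₁, hdec⟩ := decay_of_monomials d hd K g
    (fun a j => hG 2 two_pos K hK hKM a b c j k) N
  obtain ⟨M, hM, hbd⟩ := bounded_on_shell d hd K hK F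
    (hFs.continuousOn.mono (Set.prod_mono_left hKM))
  have hdd : ∀ η : Fin n → ℝ, dil d 2 (dil d 2⁻¹ η) = η := fun η => by
    ext i
    simp [dil]
  obtain ⟨C, hC, hmain⟩ := dyadic_bound (K ×ˢ (Set.univ : Set ((Fin n → ℝ) × ℝ)))
    (fun z => hnorm d z.2.1 + |z.2.2|) (fun z => (z.1, dil d 2⁻¹ z.2.1, 2⁻¹ * z.2.2))
    (fun z => ‖F z‖) e C₁ M N (by linarith) hC₁ hM
    (fun z hz => ⟨hz.1, Set.mem_univ _⟩)
    (fun z => add_nonneg (hnorm_nonneg d _) (abs_nonneg _))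
    (fun z => by
      simp only [hnorm_dil d hd 2⁻¹ (by norm_num), abs_mul]
      rw [abs_of_pos (by norm_num : (0 : ℝ) < 2⁻¹)]
      ring)
    (fun z hz h => hbd z.1 hz.1 z.2.1 z.2.2 h)
    (by
      rintro ⟨x, η, t⟩ hz h1
      have hx : x ∈ K := hz.1
      simp only at h1 ⊢
      set η' := dil d 2⁻¹ η with hη'
      set t' := 2⁻¹ * t with ht'
      have r := hrel (x, η', t') ⟨hKM hx, Set.mem_univ _⟩
      rw [dilL_apply] at r
      simp only [hη', hdd, ht', mul_inv_cancel_left₀ (two_ne_zero (α := ℝ))] at r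
      rw [← hη', ← ht'] at r
      have hgd : ‖g (x, η', t')‖ ≤ C₁ * (hnorm d η' + |t'|) ^ (-(N : ℝ)) := by
        have hp : 0 < (hnorm d η' + |t'|) ^ N := pow_pos (by linarith) _
        rw [Real.rpow_neg (by linarith), Real.rpow_natCast, ← div_eq_mul_inv, le_div_iff₀ hp,
          mul_comm]
        exact hdec x hx η' t'
      have h2s : (1 : ℝ) ≤ 2 ^ s := one_le_pow₀ one_le_two
      have r2 : (2 : ℝ) ^ s * ‖F (x, η, t)‖ ≤ ‖g (x, η', t')‖ + 2 ^ m * ‖F (x, η', t')‖ := by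
        have : (2 : ℂ) ^ s * F (x, η, t)
            = g (x, η', t') + (((2 : ℝ) ^ m : ℝ) : ℂ) * F (x, η', t') := by
          rw [r]; ring
        calc (2 : ℝ) ^ s * ‖F (x, η, t)‖ = ‖(2 : ℂ) ^ s * F (x, η, t)‖ := by simp
          _ ≤ ‖g (x, η', t')‖ + ‖(((2 : ℝ) ^ m : ℝ) : ℂ) * F (x, η', t')‖ := by
            rw [this]; exact norm_add_le _ _
          _ = _ := by
            rw [norm_mul, Complex.norm_real, Real.norm_of_nonneg (by positivity)]
      have r3 : (2 : ℝ) ^ m = 2 ^ s * 2 ^ e := by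
        rw [← Real.rpow_natCast, ← Real.rpow_add two_pos, he]
        congr 1
        ring
      rw [r3] at r2
      have r4 : ‖g (x, η', t')‖ ≤ 2 ^ s * ‖g (x, η', t')‖ :=
        le_mul_of_one_le_left (norm_nonneg _) h2s
      have r5 : (2 : ℝ) ^ s * ‖F (x, η, t)‖
          ≤ 2 ^ s * (2 ^ e * ‖F (x, η', t')‖ + ‖g (x, η', t')‖) := by linarith
      have r6 := le_of_mul_le_mul_left r5 (by positivity)
      linarith)
  refine ⟨C, hC, fun x hx η t => ?_⟩
  have h1 := hmain (x, η, t) ⟨hx, Set.mem_univ _⟩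
  simp only [← add_assoc] at h1
  have hh := hnorm_nonneg d η
  have hpos : 0 < 1 + hnorm d η + |t| := by positivity
  have h2 : |mono a η| ≤ (1 + hnorm d η + |t|) ^ (horder d a : ℝ) := by
    rw [Real.rpow_natCast]
    exact (abs_mono_le d hd a η).trans
      (pow_le_pow_left₀ hh (by linarith [abs_nonneg t]) _)
  rw [norm_mul, Complex.norm_real, Real.norm_eq_abs]
  calc |mono a η| * ‖F (x, η, t)‖
      ≤ (1 + hnorm d η + |t|) ^ (horder d a : ℝ) * (C * (1 + hnorm d η + |t|) ^ e) := by gcongr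
    _ = C * (1 + hnorm d η + |t|) ^ ((horder d a : ℝ) + e) := by
      rw [Real.rpow_add hpos]; ring
    _ = _ := by
      congr 2
      rw [he, hs]
      push_cast
      ring
end

section
/- Let m be a real number and let u be a tempered distribution on ℝⁿ with compact support, meaning there is a compact set K ⊆ ℝⁿ such that ⟨u, φ⟩ = 0 whenever φ ∈ 𝒮(ℝⁿ) vanishes on a neighbourhood of K. Suppose that for every λ > 0 there is a smooth compactly supported function g_λ : ℝⁿ → ℂ with ⟨u, φ ∘ δ_λ⟩ − λ^m · ⟨u, φ⟩ = ∫_{ℝⁿ} g_λ(ξ) φ(ξ) dξ for all φ ∈ 𝒮(ℝⁿ). Then there exists a smooth function B : ℝⁿ → ℂ of at most polynomial growth (|B(η)| ≤ C(1+‖η‖)^M for some C, M) such that ⟨u, 𝓕φ⟩ = ∫_{ℝⁿ} B(η) φ(η) dη for all φ ∈ 𝒮(ℝⁿ), where (𝓕φ)(η) = ∫ e^{−2πi⟨ξ,η⟩} φ(ξ) dξ, and for every λ > 0 the function η ↦ B(δ_λ(η)) − λ^m · B(η) belongs to 𝒮(ℝⁿ). -/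
/-!
Choose a smooth compactly supported `χ` equal to `1` on a ball containing the support of `u`, write
`e_η(x) = exp(-2πi⟨η, x⟩)`, and put `B(η) = u(χ e_η)`, the Fourier transform of `u`.

Smoothness, polynomial growth and the pairing formula all come from one device. By continuity,
`u` is bounded on Schwartz functions supported in a fixed ball by finitely many derivatives, so
by Hahn-Banach it factors through a bounded functional `U` on the Banach space of bounded continuous
`L`-jets (`extend_functional`, `exists_jet_functional`). The map `Φ` sending `η` to the jet of
`χ e_η` is smooth into that Banach space, because `χ` has compact support (`contDiff_bcf`), and
`‖Φ η‖` is `O((1 + ‖η‖)^L)` (`exists_bound_cutoff_chr`). Hence `B = U ∘ Φ` is smooth of polynomial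
growth. For a Schwartz function `φ` the Bochner integral `∫ φ(η) Φ(η) dη` is the jet of `χ 𝓕φ`, by
differentiation under the integral sign (`iteratedFDeriv_integral_param`), and commutes with `U`;
as `u` does not see the difference between `𝓕φ` and `χ 𝓕φ`, this gives `u(𝓕φ) = ∫ B φ`. The argument
is carried out for general smooth families in `family_properties`.

For the homogeneity, `⟨η, δ_λ x⟩ = ⟨δ_λ η, x⟩` yields `e_η ∘ δ_λ = e_{δ_λ η}`. Testing the
hypothesis on `χ' e_η`, with `χ'` a cutoff equal to `1` on a larger ball, gives
`B(δ_λ η) - λ^m B(η) = ∫ g_λ(ξ) e_η(ξ) dξ`, the Fourier transform of a test function, which is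
Schwartz (`exists_schwartz_fourier`).
-/

open scoped BigOperators

/-- The standard pairing `⟨ξ, η⟩ = ∑ i, ξ i * η i` on `ℝⁿ`. -/
def dotp {n : ℕ} (ξ η : Fin n → ℝ) : ℝ := ∑ i, ξ i * η i

/-! ### Functional extension and smooth families of functions -/

section General
open scoped ContDiff BoundedContinuousFunction

/-- Hahn-Banach for a functional that is dominated, on a subspace `D`, by the norm of a linear map
`J` into a normed space: it factors through `J` on `D`. Injectivity of `J` is not needed, since the
bound forces `u` to vanish on the kernel of `J` in `D`. -/
theorem extend_functional {S W : Type*} [AddCommGroup S] [Module ℂ S]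
    [NormedAddCommGroup W] [NormedSpace ℂ W] (D : Submodule ℂ S) (J : S →ₗ[ℂ] W)
    (u : S →ₗ[ℂ] ℂ) (C : ℝ) (h : ∀ ψ ∈ D, ‖u ψ‖ ≤ C * ‖J ψ‖) :
    ∃ U : StrongDual ℂ W, ∀ ψ ∈ D, U (J ψ) = u ψ := by
  let J' := (J.domRestrict D).rangeRestrict
  obtain ⟨s, hs⟩ := J'.exists_rightInverse_of_surjective (LinearMap.range_rangeRestrict _)
  have hs' : ∀ w, J (s w) = w := fun w => congrArg Subtype.val (LinearMap.congr_fun hs w)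
  let f : StrongDual ℂ (LinearMap.range (J.domRestrict D)) :=
    LinearMap.mkContinuous (u ∘ₗ D.subtype ∘ₗ s) C (fun w => by
      have := h (s w) (s w).2
      rwa [hs' w] at this)
  obtain ⟨U, hU, -⟩ := exists_extension_norm_eq _ f
  refine ⟨U, fun ψ hψ => ?_⟩
  have h1 := hU (J' ⟨ψ, hψ⟩)
  have h2 : J (s (J' ⟨ψ, hψ⟩)) = J ψ := hs' _
  have h3 := h _ (D.sub_mem (s (J' ⟨ψ, hψ⟩)).2 hψ)
  rw [map_sub, map_sub, h2, sub_self, norm_zero, mul_zero, norm_le_zero_iff, sub_eq_zero] at h3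
  exact h1.trans h3

variable {P V E : Type*} [NormedAddCommGroup P] [NormedSpace ℝ P]
  [NormedAddCommGroup V] [NormedSpace ℝ V] [NormedAddCommGroup E] [NormedSpace ℝ E]

theorem contDiff_iteratedFDeriv_param (F : P → V → E) (hF : ContDiff ℝ ∞ (Function.uncurry F))
    (l : ℕ) : ContDiff ℝ ∞ (fun p : P × V => iteratedFDeriv ℝ l (F p.1) p.2) := by
  induction l with
  | zero =>
    simp only [iteratedFDeriv_zero_eq_comp, Function.comp_apply]
    exact (continuousMultilinearCurryFin0 ℝ V E).symm.contDiff.comp hF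
  | succ l ih =>
    simp only [iteratedFDeriv_succ_eq_comp_left, Function.comp_apply]
    have hc := LinearIsometryEquiv.contDiff (𝕜 := ℝ) (n := ∞) (E := V →L[ℝ] V [×l]→L[ℝ] E)
      (F := V [×(l + 1)]→L[ℝ] E)
      (continuousMultilinearCurryLeftEquiv ℝ (fun _ : Fin (l + 1) => V) E).symm
    refine hc.comp (?_ : ContDiff ℝ ∞ fun p : P × V => fderiv ℝ (iteratedFDeriv ℝ l (F p.1)) p.2)
    refine ContDiff.fderiv (f := fun (p : P × V) x => iteratedFDeriv ℝ l (F p.1) x)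
      (n := ∞) (m := ∞) ?_ contDiff_snd (by simp)
    exact ih.comp ((contDiff_fst.comp contDiff_fst).prodMk contDiff_snd)

/-- A jointly smooth family of functions supported in a common compact set is smooth as a map into
the Banach space of bounded continuous functions. The mean value inequality, with the partial
differential uniformly continuous over the compact set, gives differentiability in the sup norm; the
directional derivatives are families of the same kind, so induction applies. -/
theorem contDiff_bcf [FiniteDimensional ℝ P] {K : Set V} (hK : IsCompact K)
    (F : P → V → E) (hF : ContDiff ℝ ∞ (Function.uncurry F)) (hFK : ∀ η, ∀ x ∉ K, F η x = 0)
    (Φ : P → V →ᵇ E) (hΦ : ∀ η x, Φ η x = F η x) : ContDiff ℝ ∞ Φ := by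
  rw [contDiff_infty]
  intro k
  -- the partial differential of `F` in the parameter
  have main : ∀ (F : P → V → E), ContDiff ℝ ∞ (Function.uncurry F) →
      (∀ η, ∀ x ∉ K, F η x = 0) → ∀ (Φ : P → V →ᵇ E), (∀ η x, Φ η x = F η x) →
      Differentiable ℝ Φ ∧ ∀ h η x, fderiv ℝ Φ η h x = fderiv ℝ (fun η => F η x) η h := by
    intro F hF hFK Φ hΦ
    let G : P → V → P →L[ℝ] E := fun η x => fderiv ℝ (fun η => F η x) η
    have hFx : ∀ x, ContDiff ℝ ∞ (fun η => F η x) := fun x =>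
      hF.comp (contDiff_id.prodMk contDiff_const)
    have hG : ContDiff ℝ ∞ (Function.uncurry G) :=
      ContDiff.fderiv (f := fun (p : P × V) η => F η p.2) (n := ∞)
        (hF.comp (contDiff_snd.prodMk (contDiff_snd.comp contDiff_fst))) contDiff_fst (by simp)
    have hGK : ∀ η, ∀ x ∉ K, G η x = 0 := by
      intro η x hx
      have : (fun η => F η x) = fun _ => 0 := funext fun η => hFK η x hx
      simp [G, this]
    have hGb : ∀ η, ∃ C, ∀ x, ‖G η x‖ ≤ C := fun η =>
      (hG.continuous.comp (Continuous.prodMk_right η)).bounded_above_of_compact_support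
        (HasCompactSupport.intro hK (hGK η))
    have hd : ∀ η, ∃ A : P →L[ℝ] (V →ᵇ E), HasFDerivAt Φ A η ∧ ∀ h x, A h x = G η x h := by
      intro η
      obtain ⟨C, hC⟩ := hGb η
      let A₀ : P →ₗ[ℝ] (V →ᵇ E) :=
        { toFun := fun h => BoundedContinuousFunction.ofNormedAddCommGroup (fun x => G η x h)
            ((hG.continuous.comp (Continuous.prodMk_right η)).clm_apply continuous_const)
            (C * ‖h‖) (fun x => (G η x).le_of_opNorm_le (hC x) h)
          map_add' := fun a b => by ext x; exact (G η x).map_add a b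
          map_smul' := fun a b => by ext x; exact (G η x).map_smul a b }
      refine ⟨LinearMap.toContinuousLinearMap A₀, ?_, fun h x => rfl⟩
      rw [hasFDerivAt_iff_isLittleO, Asymptotics.isLittleO_iff]
      intro c hc
      -- `G` is continuous in `η` uniformly over the compact set `K`
      obtain ⟨v, hv, hvK⟩ := hK.mem_uniformity_of_prod (f := G) (s := Set.univ) (q := η)
        hG.continuous.continuousOn (Set.mem_univ _) (Metric.dist_mem_uniformity hc)
      rw [nhdsWithin_univ] at hv
      obtain ⟨r, hr, hrv⟩ := Metric.mem_nhds_iff.1 hv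
      filter_upwards [Metric.ball_mem_nhds η hr] with η' hη'
      refine (BoundedContinuousFunction.norm_le (by positivity)).2 fun x => ?_
      have : (Φ η' - Φ η - (LinearMap.toContinuousLinearMap A₀) (η' - η)) x
          = F η' x - F η x - G η x (η' - η) := by
        rw [← hΦ, ← hΦ]; rfl
      rw [this]
      by_cases hx : x ∈ K
      · refine (convex_ball η r).norm_image_sub_le_of_norm_hasFDerivWithin_le' (𝕜 := ℝ)
          (f := fun η => F η x) (f' := fun η => G η x) (fun y _ => ?_) (fun y hy => ?_)
          (Metric.mem_ball_self hr) hη'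
        · exact (((hFx x).differentiable (by simp)) y).hasFDerivAt.hasFDerivWithinAt
        · rw [← dist_eq_norm]
          exact (show dist _ _ < c from hvK y (hrv hy) x hx).le
      · rw [hFK _ x hx, hFK _ x hx, hGK _ x hx]
        simp; positivity
    refine ⟨fun η => (hd η).choose_spec.1.differentiableAt, fun h η x => ?_⟩
    rw [(hd η).choose_spec.1.fderiv]
    exact (hd η).choose_spec.2 h x
  induction k generalizing F Φ with
  | zero => exact contDiff_zero.2 (main F hF hFK Φ hΦ).1.continuous
  | succ k ih =>
    push_cast
    rw [contDiff_succ_iff_fderiv_apply]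
    refine ⟨(main F hF hFK Φ hΦ).1, by simp, fun h => ?_⟩
    refine ih (fun η x => fderiv ℝ (fun η => F η x) η h) ?_ ?_ _ ((main F hF hFK Φ hΦ).2 h)
    · refine ContDiff.clm_apply ?_ contDiff_const
      exact ContDiff.fderiv (f := fun (p : P × V) η => F η p.2) (n := ∞)
        (hF.comp (contDiff_snd.prodMk (contDiff_snd.comp contDiff_fst))) contDiff_fst (by simp)
    · intro η x hx
      have : (fun η => F η x) = fun _ => 0 := funext fun η => hFK η x hx
      simp [this]

open MeasureTheory in
/-- Differentiation under the integral sign, to all orders, for integrable dominating functions. -/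
theorem iteratedFDeriv_integral_param [MeasurableSpace P] [BorelSpace P]
    [SecondCountableTopology P] {μ : Measure P} (F : P → V → E)
    (hF : ContDiff ℝ ∞ (Function.uncurry F)) (b : ℕ → P → ℝ)
    (hb : ∀ l, Integrable (b l) μ) (hFb : ∀ l η x, ‖iteratedFDeriv ℝ l (F η) x‖ ≤ b l η)
    (l : ℕ) (x : V) :
    iteratedFDeriv ℝ l (fun x => ∫ η, F η x ∂μ) x = ∫ η, iteratedFDeriv ℝ l (F η) x ∂μ := by
  have hmeas : ∀ l x, Continuous (fun η => iteratedFDeriv ℝ l (F η) x) := fun l x =>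
    (contDiff_iteratedFDeriv_param F hF l).continuous.comp (Continuous.prodMk_left x)
  have hsm : ∀ η, ContDiff ℝ ∞ (F η) := fun η => hF.comp (contDiff_const.prodMk contDiff_id)
  induction l generalizing x with
  | zero =>
    simp only [iteratedFDeriv_zero_eq_comp, Function.comp_apply]
    exact ((continuousMultilinearCurryFin0 ℝ V
      E).symm.toContinuousLinearEquiv.integral_comp_comm _).symm
  | succ l ih =>
    have e : iteratedFDeriv ℝ l (fun x => ∫ η, F η x ∂μ)
        = fun x => ∫ η, iteratedFDeriv ℝ l (F η) x ∂μ := funext ih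
    simp only [iteratedFDeriv_succ_eq_comp_left, Function.comp_apply, e]
    have hf : HasFDerivAt (fun x => ∫ η, iteratedFDeriv ℝ l (F η) x ∂μ)
        (∫ η, fderiv ℝ (iteratedFDeriv ℝ l (F η)) x ∂μ) x := by
      refine hasFDerivAt_integral_of_dominated_of_fderiv_le (bound := b (l + 1))
        (F := fun x η => iteratedFDeriv ℝ l (F η) x)
        (F' := fun x η => fderiv ℝ (iteratedFDeriv ℝ l (F η)) x) (s := Set.univ) Filter.univ_mem
        (Filter.Eventually.of_forall fun x => (hmeas l x).aestronglyMeasurable)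
        (Integrable.mono' (hb l) (hmeas l x).aestronglyMeasurable
          (Filter.Eventually.of_forall fun η => hFb l η x)) ?_ ?_ (hb _) ?_
      · have := ContDiff.fderiv (f := fun (η : P) x => iteratedFDeriv ℝ l (F η) x)
          (n := ∞) (m := ∞) (g := fun _ => x) (contDiff_iteratedFDeriv_param F hF l)
          contDiff_const (by simp)
        exact this.continuous.aestronglyMeasurable
      · refine Filter.Eventually.of_forall fun η x _ => ?_
        rw [norm_fderiv_iteratedFDeriv]
        exact hFb _ η x
      · refine Filter.Eventually.of_forall fun η x _ => ?_
        exact ((hsm η).differentiable_iteratedFDeriv (m := l)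
          (by exact_mod_cast ENat.natCast_lt_top l) x).hasFDerivAt
    rw [hf.fderiv]
    exact (ContinuousLinearEquiv.integral_comp_comm (𝕜 := ℝ) (E := V →L[ℝ] V [×l]→L[ℝ] E)
      (F := V [×(l + 1)]→L[ℝ] E) (continuousMultilinearCurryLeftEquiv ℝ
        (fun _ : Fin (l + 1) => V) E).symm.toContinuousLinearEquiv
      (fun η => fderiv ℝ (iteratedFDeriv ℝ l (F η)) x) (μ := μ)).symm

end General

/-! ### Factoring a tempered distribution through jets -/

section Jets
open scoped ContDiff BoundedContinuousFunction SchwartzMap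
open MeasureTheory

variable {V : Type*} [NormedAddCommGroup V] [NormedSpace ℝ V]

variable (V) in
/-- The fibre of complex-valued `L`-jets on `V`: families of multilinear maps of orders `0, …, L`,
with the sup norm. Symmetry of the multilinear maps is not imposed. -/
abbrev Jet (L : ℕ) : Type _ := (l : Fin (L + 1)) → V [×(l : ℕ)]→L[ℝ] ℂ

/-- The sup norm, stated for `Jet` itself: through the abbreviation, instance search fails to find
the normed structures on spaces of bounded continuous jets that it needs. -/
noncomputable instance (L : ℕ) : NormedAddCommGroup (Jet V L) := Pi.normedAddCommGroup

/-- On Schwartz functions supported in a fixed ball, a tempered distribution is a bounded functional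
of the `L`-jet in the sup norm. On the ball the polynomial weights in the Schwartz seminorms are
bounded, so these seminorms are controlled by the jet. -/
theorem exists_jet_functional (u : 𝓢(V, ℂ) →L[ℂ] ℂ) (R : ℝ) :
    ∃ (L : ℕ) (U : StrongDual ℂ (V →ᵇ Jet V L)), ∀ ψ : 𝓢(V, ℂ), (∀ x, R < ‖x‖ → ψ x = 0) →
      ∀ Ψ : V →ᵇ Jet V L, (∀ x l, Ψ x l = iteratedFDeriv ℝ l ψ x) → U Ψ = u ψ := by
  obtain ⟨s, C, -, hC⟩ := Seminorm.bound_of_continuous (schwartz_withSeminorms ℂ V ℂ)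
    ((normSeminorm ℂ ℂ).comp u.toLinearMap) (by
      change Continuous fun ψ => ‖u ψ‖
      fun_prop)
  let L := s.sup Prod.snd
  let D : Submodule ℂ 𝓢(V, ℂ) :=
    { carrier := {ψ | ∀ x, R < ‖x‖ → ψ x = 0}
      add_mem' := fun {a b} ha hb x hx => by
        change a x + b x = 0
        rw [ha x hx, hb x hx, add_zero]
      zero_mem' := fun x _ => rfl
      smul_mem' := fun c a ha x hx => by
        change c • a x = 0
        rw [ha x hx, smul_zero] }
  have hsm : ∀ (ψ : 𝓢(V, ℂ)) (l : ℕ) x, ContDiffAt ℝ l ψ x := fun ψ l x =>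
    (ψ.smooth l).contDiffAt
  let J : 𝓢(V, ℂ) →ₗ[ℂ] (V →ᵇ Jet V L) :=
    { toFun := fun ψ => BoundedContinuousFunction.ofNormedAddCommGroup
        (fun x (l : Fin (L + 1)) => iteratedFDeriv ℝ l ψ x)
        (continuous_pi fun l => (ψ.smooth l).continuous_iteratedFDeriv le_rfl)
        (∑ l : Fin (L + 1), SchwartzMap.seminorm ℝ 0 l ψ)
        (fun x => (pi_norm_le_iff_of_nonneg (Finset.sum_nonneg fun _ _ => apply_nonneg _ _)).2
          fun l => (SchwartzMap.norm_iteratedFDeriv_le_seminorm ℝ ψ l x).trans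
            (Finset.single_le_sum (f := fun l : Fin (L + 1) => SchwartzMap.seminorm ℝ 0 l ψ)
              (fun _ _ => apply_nonneg _ _) (Finset.mem_univ l)))
      map_add' := fun a b => by
        ext x : 1; funext l
        exact iteratedFDeriv_add_apply (hsm a l x) (hsm b l x)
      map_smul' := fun c a => by
        ext x : 1; funext l
        exact iteratedFDeriv_const_smul_apply (hsm a l x) }
  have hJ : ∀ ψ x l, J ψ x l = iteratedFDeriv ℝ l ψ x := fun _ _ _ => rfl
  obtain ⟨U, hU⟩ := extend_functional (W := V →ᵇ Jet V L) D J u.toLinearMap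
    (C * ∑ i ∈ s, |R| ^ i.1) (by
    intro ψ hψ
    have h1 : ‖u ψ‖ ≤ C * (s.sup (schwartzSeminormFamily ℂ V ℂ)) ψ := hC ψ
    refine h1.trans ?_
    rw [mul_assoc]
    refine mul_le_mul_of_nonneg_left ?_ C.2
    refine Seminorm.finset_sup_apply_le (by positivity) fun i hi => ?_
    refine SchwartzMap.seminorm_le_bound ℂ _ _ _ (by positivity) fun x => ?_
    have hil : i.2 < L + 1 := Nat.lt_succ_of_le (Finset.le_sup (f := Prod.snd) hi)
    have h3 : ‖iteratedFDeriv ℝ i.2 ψ x‖ ≤ ‖J ψ‖ :=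
      (norm_le_pi_norm (J ψ x) ⟨i.2, hil⟩).trans ((J ψ).norm_coe_le_norm x)
    by_cases hx : R < ‖x‖
    · have : iteratedFDeriv ℝ i.2 ψ x = 0 := by
        by_contra hne
        have h4 := support_iteratedFDeriv_subset (𝕜 := ℝ) i.2 (Function.mem_support.2 hne)
        have h5 : tsupport ψ ⊆ Metric.closedBall 0 R :=
          closure_minimal (fun y hy => by
            by_contra hy'
            rw [mem_closedBall_zero_iff, not_le] at hy'
            exact hy (hψ y hy')) Metric.isClosed_closedBall
        exact absurd (mem_closedBall_zero_iff.1 (h5 h4)) (not_le.2 hx)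
      rw [this, norm_zero, mul_zero]; positivity
    · refine mul_le_mul ?_ h3 (norm_nonneg _) (by positivity)
      refine (pow_le_pow_left₀ (norm_nonneg x) ((not_lt.1 hx).trans (le_abs_self R)) _).trans ?_
      exact Finset.single_le_sum (f := fun i : ℕ × ℕ => |R| ^ i.1) (fun _ _ => by positivity) hi)
  refine ⟨L, U, fun ψ hψ Ψ hΨ => ?_⟩
  have : Ψ = J ψ := by
    ext x : 1; funext l
    rw [hΨ, hJ]
  rw [this]
  exact hU ψ hψ

end Jets

/-! ### Plane waves -/

section Characters
open scoped ContDiff BoundedContinuousFunction SchwartzMap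
open MeasureTheory

variable {n : ℕ}

/-- The plane wave `x ↦ exp(-2πi⟨η, x⟩)` of frequency `η`. -/
noncomputable def chr (η x : Fin n → ℝ) : ℂ :=
  Complex.exp (-2 * (Real.pi : ℂ) * Complex.I * (dotp η x : ℝ))

theorem contDiff_chr : ContDiff ℝ ∞ (Function.uncurry (chr (n := n))) := by
  have h : ContDiff ℝ ∞ (fun p : (Fin n → ℝ) × (Fin n → ℝ) => dotp p.1 p.2) := by
    unfold dotp; fun_prop
  exact (contDiff_const.mul (Complex.ofRealCLM.contDiff.comp h)).cexp

theorem contDiff_chr_right (η : Fin n → ℝ) : ContDiff ℝ ∞ (chr η) :=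
  contDiff_chr.comp (contDiff_const.prodMk contDiff_id)

/-- Graded dilations are diagonal, hence symmetric for the standard pairing. -/
theorem dotp_dil (d : Fin n → ℕ) (lam : ℝ) (η x : Fin n → ℝ) :
    dotp η (dil d lam x) = dotp (dil d lam η) x := by
  simp only [dotp, dil]; exact Finset.sum_congr rfl fun i _ => by ring

theorem iteratedDeriv_expline (l : ℕ) :
    iteratedDeriv l (fun t : ℝ => Complex.exp (-2 * (Real.pi : ℂ) * Complex.I * (t : ℂ)))
      = fun t : ℝ => (-2 * (Real.pi : ℂ) * Complex.I) ^ l *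
        Complex.exp (-2 * (Real.pi : ℂ) * Complex.I * (t : ℂ)) := by
  induction l with
  | zero => simp
  | succ l ih =>
    rw [iteratedDeriv_succ, ih]
    ext t
    have : HasDerivAt (fun t : ℝ => (-2 * (Real.pi : ℂ) * Complex.I * (t : ℂ)))
        (-2 * (Real.pi : ℂ) * Complex.I) t := by
      simpa using (Complex.ofRealCLM.hasDerivAt (x := t)).const_mul
        (-2 * (Real.pi : ℂ) * Complex.I)
    rw [(this.cexp.const_mul _).deriv]; ring

theorem norm_iteratedFDeriv_chr_le (l : ℕ) (η x : Fin n → ℝ) :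
    ‖iteratedFDeriv ℝ l (chr η) x‖ ≤ (2 * Real.pi * (n * ‖η‖)) ^ l := by
  let T : (Fin n → ℝ) →L[ℝ] ℝ := ∑ i, η i • ContinuousLinearMap.proj i
  have hTx : ∀ x, T x = dotp η x := fun x => by simp [T, dotp]
  have hT : ‖T‖ ≤ n * ‖η‖ := by
    refine ContinuousLinearMap.opNorm_le_bound _ (by positivity) fun x => ?_
    rw [hTx, dotp]
    refine (norm_sum_le _ _).trans ?_
    refine (Finset.sum_le_sum (g := fun _ => ‖η‖ * ‖x‖) fun i _ => ?_).trans ?_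
    · rw [norm_mul]
      exact mul_le_mul (norm_le_pi_norm _ _) (norm_le_pi_norm _ _) (norm_nonneg _) (norm_nonneg _)
    · simp [mul_assoc]
  let f : ℝ → ℂ := fun t => Complex.exp (-2 * (Real.pi : ℂ) * Complex.I * (t : ℂ))
  have hf : ContDiff ℝ ∞ f := (contDiff_const.mul Complex.ofRealCLM.contDiff).cexp
  have e : chr η = f ∘ T := by
    funext x; simp only [chr, f, Function.comp_apply, hTx]
  rw [e, T.iteratedFDeriv_comp_right hf x (by exact_mod_cast le_top)]
  refine (ContinuousMultilinearMap.norm_compContinuousLinearMap_le _ _).trans ?_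
  rw [norm_iteratedFDeriv_eq_norm_iteratedDeriv, iteratedDeriv_expline, Finset.prod_const,
    Finset.card_univ, Fintype.card_fin]
  have h1 : ‖Complex.exp (-2 * (Real.pi : ℂ) * Complex.I * ((T x : ℝ) : ℂ))‖ = 1 := by
    rw [show -2 * (Real.pi : ℂ) * Complex.I * ((T x : ℝ) : ℂ)
      = ((-2 * Real.pi * T x : ℝ) : ℂ) * Complex.I by push_cast; ring]
    exact Complex.norm_exp_ofReal_mul_I _
  have h2 : ‖(-2 * (Real.pi : ℂ) * Complex.I)‖ = 2 * Real.pi := by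
    simp [abs_of_pos Real.pi_pos]
  rw [norm_mul, h1, norm_pow, h2, mul_one, ← mul_pow]
  gcongr

/-- Each derivative of `x ↦ exp(-2πi⟨η, x⟩)` costs a factor `O(‖η‖)`; with a cutoff, the Leibniz
rule gives the growth of the jets in the frequency. -/
theorem exists_bound_cutoff_chr {χ : (Fin n → ℝ) → ℂ} (hχ : ContDiff ℝ ∞ χ)
    (hχc : HasCompactSupport χ) (l : ℕ) :
    ∃ A : ℝ, 0 ≤ A ∧ ∀ η x,
      ‖iteratedFDeriv ℝ l (fun x => χ x * chr η x) x‖ ≤ A * (1 + ‖η‖) ^ l := by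
  have hb : ∀ i : ℕ, ∃ C : ℝ, ∀ x, ‖iteratedFDeriv ℝ i χ x‖ ≤ C := fun i =>
    (hχ.continuous_iteratedFDeriv (by exact_mod_cast le_top)).bounded_above_of_compact_support
      (hχc.iteratedFDeriv i)
  choose C hC using hb
  have hC0 : ∀ i, 0 ≤ C i := fun i => (norm_nonneg _).trans (hC i 0)
  have hπ := Real.pi_pos
  refine ⟨∑ i ∈ Finset.range (l + 1), (l.choose i : ℝ) * C i * (2 * Real.pi * n + 1) ^ l,
    Finset.sum_nonneg fun i _ => by have := hC0 i; positivity, fun η x => ?_⟩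
  refine (norm_iteratedFDeriv_mul_le hχ (contDiff_chr_right η) x
    (by exact_mod_cast le_top)).trans ?_
  rw [Finset.sum_mul]
  refine Finset.sum_le_sum fun i hi => ?_
  rw [mul_assoc _ (_ ^ l)]
  have hη := norm_nonneg η
  have h0 := hC0 i
  refine mul_le_mul (mul_le_mul_of_nonneg_left (hC i x) (by positivity)) ?_ (norm_nonneg _)
    (by positivity)
  refine (norm_iteratedFDeriv_chr_le _ η x).trans ?_
  rw [← mul_pow]
  refine (pow_le_pow_left₀ (by positivity) ?_ _).trans
    (pow_le_pow_right₀ ?_ (Nat.sub_le l i))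
  · have : 0 ≤ 2 * Real.pi * n := by positivity
    nlinarith
  · have : 0 ≤ 2 * Real.pi * n := by positivity
    nlinarith [mul_nonneg this hη]

end Characters

/-! ### Applying a distribution to a smooth family -/

section Family
open scoped ContDiff BoundedContinuousFunction SchwartzMap
open MeasureTheory

variable {P V : Type*} [NormedAddCommGroup P] [NormedSpace ℝ P] [FiniteDimensional ℝ P]
  [MeasurableSpace P] [BorelSpace P] {μ : Measure P} [NormedAddCommGroup V] [NormedSpace ℝ V]

/-- For a smooth family `F η` of functions supported in a common compact set, with derivatives of
polynomial growth in `η`, the function `B(η) = u(F η)` is smooth, of polynomial growth, and `u`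
commutes with superpositions of the `F η`. The value `B η` is specified through any Schwartz function
that agrees with `F η`. -/
theorem family_properties (u : 𝓢(V, ℂ) →L[ℂ] ℂ) (F : P → V → ℂ)
    (hF : ContDiff ℝ ∞ (Function.uncurry F)) {K : Set V} (hK : IsCompact K)
    (hFK : ∀ η, ∀ x ∉ K, F η x = 0) {R : ℝ} (hFR : ∀ η x, R < ‖x‖ → F η x = 0)
    (A : ℕ → ℝ) (hA0 : ∀ l, 0 ≤ A l)
    (hA : ∀ l η x, ‖iteratedFDeriv ℝ l (F η) x‖ ≤ A l * (1 + ‖η‖) ^ l)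
    (B : P → ℂ) (hB : ∀ η (ψ : 𝓢(V, ℂ)), (∀ x, ψ x = F η x) → B η = u ψ) :
    ContDiff ℝ ∞ B ∧ (∃ (C : ℝ) (L : ℕ), ∀ η, ‖B η‖ ≤ C * (1 + ‖η‖) ^ L) ∧
    ∀ φ : P → ℂ, ContDiff ℝ ∞ φ →
      (∀ (a : ℝ) (l : ℕ), Integrable (fun η => ‖φ η‖ * (a * (1 + ‖η‖) ^ l)) μ) →
      ∀ ψ : 𝓢(V, ℂ), (∀ x, ψ x = ∫ η, φ η • F η x ∂μ) → u ψ = ∫ η, B η * φ η ∂μ := by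
  have : ProperSpace P := FiniteDimensional.proper ℝ P
  obtain ⟨L, U, hU⟩ := exists_jet_functional u R
  have hFη : ∀ η, ContDiff ℝ ∞ (F η) := fun η => hF.comp (contDiff_const.prodMk contDiff_id)
  let S : P → 𝓢(V, ℂ) := fun η => (HasCompactSupport.intro hK (hFK η)).toSchwartzMap (hFη η)
  have hS : ∀ η x, S η x = F η x := fun _ _ => rfl
  let j : P → V → Jet V L := fun η x l => iteratedFDeriv ℝ l (F η) x
  have hj : ContDiff ℝ ∞ (Function.uncurry j) :=
    contDiff_pi.2 fun l => contDiff_iteratedFDeriv_param F hF l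
  let M : ℝ := ∑ l : Fin (L + 1), A l
  have hjb : ∀ η x, ‖j η x‖ ≤ M * (1 + ‖η‖) ^ L := by
    intro η x
    have h1 : (1 : ℝ) ≤ 1 + ‖η‖ := by linarith [norm_nonneg η]
    have hM : 0 ≤ M := Finset.sum_nonneg fun _ _ => hA0 _
    refine (pi_norm_le_iff_of_nonneg (by positivity)).2 fun l => (hA l η x).trans ?_
    exact mul_le_mul
      (Finset.single_le_sum (f := fun l : Fin (L + 1) => A l) (fun _ _ => hA0 _)
        (Finset.mem_univ l))
      (pow_le_pow_right₀ h1 (Nat.le_of_lt_succ l.2)) (by positivity) hM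
  let Φ : P → V →ᵇ Jet V L := fun η =>
    BoundedContinuousFunction.ofNormedAddCommGroup (j η)
      (hj.continuous.comp (Continuous.prodMk_right η)) _ (hjb η)
  have hΦ : ∀ η x, Φ η x = j η x := fun _ _ => rfl
  have hΦs : ContDiff ℝ ∞ Φ := by
    refine contDiff_bcf hK j hj (fun η x hx => ?_) Φ hΦ
    funext l
    by_contra hne
    have h1 := support_iteratedFDeriv_subset (𝕜 := ℝ) l (Function.mem_support.2 hne)
    have h2 : tsupport (F η) ⊆ K := closure_minimal (fun y hy => by
      by_contra hy'
      exact hy (hFK η y hy')) hK.isClosed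
    exact hx (h2 h1)
  have hΦn : ∀ η, ‖Φ η‖ ≤ M * (1 + ‖η‖) ^ L := fun η =>
    (BoundedContinuousFunction.norm_le ((norm_nonneg _).trans (hjb η 0))).2 (hjb η)
  have hBU : ∀ η, B η = U (Φ η) := by
    intro η
    rw [hU (S η) (fun x hx => by rw [hS, hFR η x hx]) (Φ η) (fun x l => rfl)]
    exact hB η (S η) (hS η)
  refine ⟨?_, ⟨‖U‖ * M, L, fun η => ?_⟩, fun φ hφ hφi ψ hψ => ?_⟩
  · rw [show B = fun η => U (Φ η) from funext hBU]
    exact (U.restrictScalars ℝ).contDiff.comp hΦs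
  · rw [hBU, mul_assoc]
    exact (U.le_opNorm _).trans (mul_le_mul_of_nonneg_left (hΦn η) (norm_nonneg _))
  · have hint : Integrable (fun η => φ η • Φ η) μ := by
      refine Integrable.mono' (hφi M L)
        (hφ.continuous.smul hΦs.continuous).aestronglyMeasurable
        (Filter.Eventually.of_forall fun η => ?_)
      rw [norm_smul]
      exact mul_le_mul_of_nonneg_left (hΦn η) (norm_nonneg _)
    -- the jets of `ψ` are obtained by differentiating under the integral sign
    have hψj : ∀ x (l : Fin (L + 1)), (∫ η, φ η • Φ η ∂μ) x l = iteratedFDeriv ℝ l ψ x := by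
      intro x l
      have e1 : (ψ : V → ℂ) = fun x => ∫ η, φ η • F η x ∂μ := funext hψ
      have e0 : ∀ (l : ℕ) η x, iteratedFDeriv ℝ l (fun x => φ η • F η x) x
          = φ η • iteratedFDeriv ℝ l (F η) x := fun l η x =>
        iteratedFDeriv_const_smul_apply (a := φ η)
          ((hFη η).of_le (by exact_mod_cast le_top)).contDiffAt
      have e2 := iteratedFDeriv_integral_param (μ := μ) (fun η x => φ η • F η x)
        ((hφ.comp contDiff_fst).smul hF)
        (fun l η => ‖φ η‖ * (A l * (1 + ‖η‖) ^ l))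
        (fun l => hφi (A l) l)
        (fun l η x => by
          rw [e0, norm_smul]
          exact mul_le_mul_of_nonneg_left (hA l η x) (norm_nonneg _)) l x
      rw [e1, e2]
      simp only [e0]
      let T : (V →ᵇ Jet V L) →L[ℝ] (V [×(l : ℕ)]→L[ℝ] ℂ) :=
        (ContinuousLinearMap.proj (R := ℝ)
          (φ := fun l : Fin (L + 1) => V [×(l : ℕ)]→L[ℝ] ℂ) l).comp
          (BoundedContinuousFunction.evalCLM ℝ x)
      exact (T.integral_comp_comm hint).symm
    have hψ0 : ∀ x, R < ‖x‖ → ψ x = 0 := fun x hx => by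
      rw [hψ]; simp [hFR _ x hx]
    rw [← hU ψ hψ0 _ hψj, ← U.integral_comp_comm hint]
    refine integral_congr_ae (Filter.Eventually.of_forall fun η => ?_)
    simp only [map_smul, hBU, smul_eq_mul, mul_comm]

end Family

/-! ### The Fourier transform of a compactly supported distribution -/

section Fibre
open scoped ContDiff BoundedContinuousFunction SchwartzMap
open MeasureTheory

variable {n : ℕ}

theorem exists_cutoff (r : ℝ) : ∃ χ : (Fin n → ℝ) → ℂ, ContDiff ℝ ∞ χ ∧ HasCompactSupport χ ∧
    (∀ x, ‖x‖ ≤ r → χ x = 1) ∧ ∃ R, ∀ x, R < ‖x‖ → χ x = 0 := by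
  let f : ContDiffBump (0 : Fin n → ℝ) :=
    ⟨max r 1, max r 1 + 1, lt_of_lt_of_le one_pos (le_max_right _ _), lt_add_one _⟩
  refine ⟨fun x => (f x : ℂ), Complex.ofRealCLM.contDiff.comp f.contDiff,
    f.hasCompactSupport.comp_left (g := ((↑) : ℝ → ℂ)) rfl, fun x hx => ?_, max r 1 + 1,
    fun x hx => ?_⟩
  · change ((f x : ℝ) : ℂ) = 1
    rw [f.one_of_mem_closedBall (mem_closedBall_zero_iff.2 (hx.trans (le_max_left _ _)))]
    rfl
  · have : f x = 0 := f.zero_of_le_dist (by rw [dist_zero_right]; exact hx.le)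
    change ((f x : ℝ) : ℂ) = 0
    rw [this]; rfl

/-- The Fourier transform of a Schwartz function on `Fin n → ℝ` is Schwartz. The Fourier transform on
Schwartz space requires an inner product space, so it is transported from `EuclideanSpace`. -/
theorem exists_schwartz_fourier (φ : 𝓢(Fin n → ℝ, ℂ)) :
    ∃ ρ : 𝓢(Fin n → ℝ, ℂ), ∀ η, ρ η = ∫ ξ, φ ξ * chr η ξ := by
  let e := PiLp.continuousLinearEquiv 2 ℝ (fun _ : Fin n => ℝ)
  let φ' : 𝓢(EuclideanSpace ℝ (Fin n), ℂ) := SchwartzMap.compCLMOfContinuousLinearEquiv ℂ e φ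
  refine ⟨SchwartzMap.compCLMOfContinuousLinearEquiv ℂ e.symm (FourierTransform.fourier φ'),
    fun η => ?_⟩
  rw [SchwartzMap.compCLMOfContinuousLinearEquiv_apply, Function.comp_apply,
    SchwartzMap.fourier_coe, Real.fourier_eq',
    ← (PiLp.volume_preserving_toLp (Fin n)).integral_comp
      (MeasurableEquiv.toLp 2 (Fin n → ℝ)).measurableEmbedding]
  refine integral_congr_ae (Filter.Eventually.of_forall fun ξ => ?_)
  have h1 : inner ℝ (WithLp.toLp 2 ξ) (e.symm η) = dotp η ξ := by
    simp [e, PiLp.inner_apply, dotp]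
  have h2 : φ' (WithLp.toLp 2 ξ) = φ ξ := rfl
  simp only [h1, h2, chr, smul_eq_mul]
  rw [mul_comm]
  congr 2
  push_cast; ring

theorem integrable_norm_mul_one_add_pow (φ : 𝓢(Fin n → ℝ, ℂ)) (A : ℝ) (l : ℕ) :
    Integrable (fun η => ‖φ η‖ * (A * (1 + ‖η‖) ^ l)) := by
  have : (fun η : Fin n → ℝ => ‖φ η‖ * (A * (1 + ‖η‖) ^ l))
      = fun η => ∑ k ∈ Finset.range (l + 1), (A * (l.choose k)) * (‖η‖ ^ k * ‖φ η‖) := by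
    funext η
    rw [add_comm 1, add_pow, Finset.mul_sum, Finset.mul_sum]
    exact Finset.sum_congr rfl fun k _ => by rw [one_pow]; ring
  rw [this]
  exact integrable_finsetSum _ fun k _ => (φ.integrable_pow_mul volume k).const_mul _

/-- The case of `family_properties` for the cut-off plane waves `χ e_η`: it yields smoothness,
polynomial growth, and the pairing formula up to the cutoff `χ`. -/
theorem symbol_properties (u : 𝓢(Fin n → ℝ, ℂ) →L[ℂ] ℂ) {χ : (Fin n → ℝ) → ℂ}
    (hχ : ContDiff ℝ ∞ χ) (hχc : HasCompactSupport χ) {R : ℝ} (hχR : ∀ x, R < ‖x‖ → χ x = 0)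
    (B : (Fin n → ℝ) → ℂ)
    (hB : ∀ η (ψ : 𝓢(Fin n → ℝ, ℂ)), (∀ x, ψ x = χ x * chr η x) → B η = u ψ) :
    ContDiff ℝ ∞ B ∧ (∃ (C : ℝ) (L : ℕ), ∀ η, ‖B η‖ ≤ C * (1 + ‖η‖) ^ L) ∧
    ∀ φ ψ : 𝓢(Fin n → ℝ, ℂ), (∀ x, ψ x = χ x * ∫ η, chr η x * φ η) →
      u ψ = ∫ η, B η * φ η := by
  choose A hA0 hA using exists_bound_cutoff_chr hχ hχc
  obtain ⟨h1, h2, h3⟩ := family_properties (μ := volume) u (fun η x => χ x * chr η x)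
    ((hχ.comp contDiff_snd).mul contDiff_chr) hχc.isCompact
    (fun η x hx => by rw [image_eq_zero_of_notMem_tsupport hx, zero_mul])
    (fun η x hx => by rw [hχR x hx, zero_mul]) A hA0 hA B hB
  refine ⟨h1, h2, fun φ ψ hψ => h3 φ (φ.smooth ⊤) (integrable_norm_mul_one_add_pow φ) ψ
    fun x => ?_⟩
  rw [hψ, ← integral_const_mul]
  refine integral_congr_ae (Filter.Eventually.of_forall fun η => ?_)
  simp only [smul_eq_mul]; ring

/-- The graded dilation by `lam > 0` as a continuous linear equivalence, with inverse the dilation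
by `lam⁻¹`. -/
noncomputable def dilEquiv (d : Fin n → ℕ) {lam : ℝ} (hlam : 0 < lam) :
    (Fin n → ℝ) ≃L[ℝ] (Fin n → ℝ) :=
  LinearEquiv.toContinuousLinearEquiv
    { toFun := dil d lam
      invFun := dil d lam⁻¹
      map_add' := fun a b => by funext i; simp [dil, mul_add]
      map_smul' := fun a b => by funext i; simp [dil]; ring
      left_inv := fun a => by funext i; simp [dil, hlam.ne']
      right_inv := fun a => by funext i; simp [dil, hlam.ne'] }

theorem dilEquiv_apply (d : Fin n → ℕ) {lam : ℝ} (hlam : 0 < lam) (x : Fin n → ℝ) :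
    dilEquiv d hlam x = dil d lam x := rfl

end Fibre

theorem stmt4 {n : ℕ} (d : Fin n → ℕ) (hd : ∀ i, 1 ≤ d i) (m : ℝ)
    (u : SchwartzMap (Fin n → ℝ) ℂ →L[ℂ] ℂ)
    (hsupp : ∃ K : Set (Fin n → ℝ), IsCompact K ∧
      ∀ φ : SchwartzMap (Fin n → ℝ) ℂ,
        (∃ U : Set (Fin n → ℝ), IsOpen U ∧ K ⊆ U ∧ ∀ x ∈ U, φ x = 0) → u φ = 0)
    (hhom : ∀ lam : ℝ, 0 < lam → ∃ g : (Fin n → ℝ) → ℂ,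
      ContDiff ℝ (⊤ : ℕ∞) g ∧ HasCompactSupport g ∧
      ∀ φ ψ : SchwartzMap (Fin n → ℝ) ℂ, (∀ ξ, ψ ξ = φ (dil d lam ξ)) →
        u ψ - ((lam ^ m : ℝ) : ℂ) * u φ = ∫ ξ : Fin n → ℝ, g ξ * φ ξ) :
    ∃ B : (Fin n → ℝ) → ℂ,
      ContDiff ℝ (⊤ : ℕ∞) B ∧
      (∃ C M : ℝ, ∀ η, ‖B η‖ ≤ C * (1 + ‖η‖) ^ M) ∧
      (∀ φ ψ : SchwartzMap (Fin n → ℝ) ℂ,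
        (∀ η, ψ η = ∫ ξ : Fin n → ℝ,
            Complex.exp (-2 * (Real.pi : ℂ) * Complex.I * (dotp ξ η : ℝ)) * φ ξ) →
        u ψ = ∫ η : Fin n → ℝ, B η * φ η) ∧
      (∀ lam : ℝ, 0 < lam → ∃ ρ : SchwartzMap (Fin n → ℝ) ℂ,
        ∀ η, B (dil d lam η) - ((lam ^ m : ℝ) : ℂ) * B η = ρ η) := by
  obtain ⟨K, hK, hKu⟩ := hsupp
  obtain ⟨r, hr⟩ := hK.isBounded.subset_ball 0
  have hloc : ∀ φ ψ : SchwartzMap (Fin n → ℝ) ℂ, (∀ x, ‖x‖ ≤ r → φ x = ψ x) → u φ = u ψ := by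
    intro φ ψ h
    rw [← sub_eq_zero, ← map_sub]
    refine hKu _ ⟨Metric.ball 0 r, Metric.isOpen_ball, hr, fun x hx => ?_⟩
    rw [sub_apply, h x (mem_ball_zero_iff.1 hx).le, sub_self]
  -- the plane wave of frequency `η`, cut off by `χ`
  let S : ∀ χ : (Fin n → ℝ) → ℂ, ContDiff ℝ (⊤ : ℕ∞) χ → HasCompactSupport χ → (Fin n → ℝ) →
      SchwartzMap (Fin n → ℝ) ℂ := fun χ hχ hχc η =>
    (hχc.mul_right (f' := chr η)).toSchwartzMap (hχ.mul (contDiff_chr_right η))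
  have hS : ∀ χ hχ hχc η x, S χ hχ hχc η x = χ x * chr η x := fun _ _ _ _ _ => rfl
  obtain ⟨χ, hχ, hχc, hχ1, R, hχR⟩ := exists_cutoff (n := n) r
  obtain ⟨hB1, ⟨C, L, hB2⟩, hB3⟩ := symbol_properties u hχ hχc hχR (fun η => u (S χ hχ hχc η))
    (fun η ψ hψ => congrArg u (SchwartzMap.ext fun x => (hψ x).symm))
  refine ⟨fun η => u (S χ hχ hχc η), hB1, ⟨C, L, fun η => ?_⟩, fun φ ψ hψ => ?_, fun lam hlam => ?_⟩
  · rw [Real.rpow_natCast]; exact hB2 η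
  · let ψ' : SchwartzMap (Fin n → ℝ) ℂ :=
      (hχc.mul_right (f' := ψ)).toSchwartzMap (hχ.mul (ψ.smooth ⊤))
    have hψ' : ∀ x, ψ' x = χ x * ψ x := fun _ => rfl
    rw [hloc ψ ψ' fun x hx => by rw [hψ', hχ1 x hx, one_mul]]
    refine hB3 φ ψ' fun x => ?_
    rw [hψ', hψ]; rfl
  · obtain ⟨g, hg, hgc, hgu⟩ := hhom lam hlam
    obtain ⟨ρ, hρ⟩ := exists_schwartz_fourier (hgc.toSchwartzMap hg)
    refine ⟨ρ, fun η => ?_⟩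
    -- a cutoff equal to `1` on the ball of radius `r`, its dilate and the support of `g`
    obtain ⟨r₁, hr₁⟩ := hgc.isCompact.isBounded.subset_closedBall 0
    obtain ⟨r₂, hr₂⟩ := ((isCompact_closedBall (0 : Fin n → ℝ) r).image
      (dilEquiv d hlam).continuous).isBounded.subset_closedBall 0
    obtain ⟨χ', hχ', hχc', hχ1', -⟩ := exists_cutoff (n := n) (max r (max r₁ r₂))
    have h1 := hgu (S χ' hχ' hχc' η)
      (SchwartzMap.compCLMOfContinuousLinearEquiv ℂ (dilEquiv d hlam) (S χ' hχ' hχc' η))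
      (fun ξ => rfl)
    rw [hρ]
    have h2 : u (S χ' hχ' hχc' η) = u (S χ hχ hχc η) := hloc _ _ fun x hx => by
      rw [hS χ' hχ' hχc', hS χ hχ hχc, hχ1 x hx, hχ1' x (hx.trans (le_max_left _ _))]
    have h3 : u (SchwartzMap.compCLMOfContinuousLinearEquiv ℂ (dilEquiv d hlam)
        (S χ' hχ' hχc' η)) = u (S χ hχ hχc (dil d lam η)) := hloc _ _ fun x hx => by
      have hx2 : ‖dil d lam x‖ ≤ r₂ := mem_closedBall_zero_iff.1
        (hr₂ ⟨x, mem_closedBall_zero_iff.2 hx, rfl⟩)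
      rw [SchwartzMap.compCLMOfContinuousLinearEquiv_apply, Function.comp_apply, dilEquiv_apply,
        hS χ' hχ' hχc', hS χ hχ hχc, hχ1 x hx,
        hχ1' _ (hx2.trans ((le_max_right _ _).trans (le_max_right _ _))),
        chr, chr, dotp_dil]
    change u (S χ hχ hχc (dil d lam η)) - ((lam ^ m : ℝ) : ℂ) * u (S χ hχ hχc η) = _
    rw [← h2, ← h3, h1]
    refine MeasureTheory.integral_congr_ae (Filter.Eventually.of_forall fun ξ => ?_)
    change g ξ * (χ' ξ * chr η ξ) = g ξ * chr η ξ
    by_cases hξ : g ξ = 0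
    · simp [hξ]
    · have := mem_closedBall_zero_iff.1 (hr₁ (subset_tsupport g hξ))
      rw [hχ1' ξ (this.trans ((le_max_left _ _).trans (le_max_right _ _))), one_mul]
end

section
/- Let m be a real number and for each j ∈ ℕ let a_j : ℝⁿ → ℂ be a smooth function such that for every j and every multi-index b ∈ ℕⁿ there is a constant C with |∂^b a_j(η)| ≤ C (1 + ‖η‖)^{m − j − |b|} for all η ∈ ℝⁿ (‖·‖ the Euclidean norm). Then there exists a smooth function a : ℝⁿ → ℂ such that for every N ∈ ℕ and every multi-index b ∈ ℕⁿ there is a constant C with |∂^b (a − Σ_{j<N} a_j)(η)| ≤ C (1 + ‖η‖)^{m − N − |b|} for all η ∈ ℝⁿ. -/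
/-!
Asymptotic summation of symbols, by Borel's argument. Take the candidate
`A = ∑ j, χ (R j) • a j`, where `χ R` is a smooth excision function vanishing on `‖η‖ ≤ R` and
equal to `1` far out, and `R j → ∞`, so that the sum is locally finite.

The functions `χ R` with `R ≥ 1` are dilates of one function and satisfy the symbol estimates of
order `0` uniformly in `R` (`exists_cutoff`), so by Leibniz' rule the `k`-th derivative of
`χ R • a j` is at most `C j k * (1 + ‖η‖) ^ (m - j - k)` with `C j k` independent of `R`
(`exists_bound_smul`). As `χ R` vanishes for `‖η‖ < R`, giving up one order of decay gains a factor
`1 / R`. Choosing `R j ≥ 2 ^ j * C j k` for all `k ≤ j` therefore bounds the `k`-th derivative of the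
`j`-th term by `2⁻¹ ^ j * (1 + ‖η‖) ^ (m - N - k)` as soon as `j ≥ max (N + 1) k`. In
`A - ∑ j < N, a j` the finitely many other terms are harmless: for `j < N` they are
`(χ (R j) - 1) • a j`, smooth with compact support, and for `j ≥ N` they have order
`m - j ≤ m - N` (`exists_asymptotic_sum`).

The estimates are carried out on the norms of the full Fréchet derivatives `iteratedFDeriv`. That
these are equivalent to the estimates on all `∂^b` is `norm_mpdE_le` in one direction and
`symBd_of_mpdE`, which relies on the commutation of partial derivatives, in the other.
-/

open scoped BigOperators

/-- Partial derivative in the `i`-th coordinate direction on Euclidean space. -/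
noncomputable def pdE {n : ℕ} (i : Fin n) (f : EuclideanSpace ℝ (Fin n) → ℂ) :
    EuclideanSpace ℝ (Fin n) → ℂ :=
  fun x => fderiv ℝ f x (EuclideanSpace.single i 1)

/-- Iterated partial derivative `∂^b` associated to the multi-index `b`. -/
noncomputable def mpdE {n : ℕ} (b : Fin n → ℕ) (f : EuclideanSpace ℝ (Fin n) → ℂ) :
    EuclideanSpace ℝ (Fin n) → ℂ :=
  ((List.finRange n).foldr (fun i g => (pdE i)^[b i] ∘ g) id) f

/-! ### Partial derivatives versus Fréchet derivatives -/

lemma contDiff_pdE {n : ℕ} (i : Fin n) {f : EuclideanSpace ℝ (Fin n) → ℂ}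
    (hf : ContDiff ℝ (⊤ : ℕ∞) f) : ContDiff ℝ (⊤ : ℕ∞) (pdE i f) :=
  (hf.fderiv_right (m := (⊤ : ℕ∞)) (by simp)).clm_apply contDiff_const

lemma contDiff_pdE_iterate {n : ℕ} (i : Fin n) (k : ℕ) {f : EuclideanSpace ℝ (Fin n) → ℂ}
    (hf : ContDiff ℝ (⊤ : ℕ∞) f) : ContDiff ℝ (⊤ : ℕ∞) ((pdE i)^[k] f) := by
  induction k with
  | zero => exact hf
  | succ k ih => rw [Function.iterate_succ_apply']; exact contDiff_pdE i ih

lemma pdE_comm {n : ℕ} (i j : Fin n) {f : EuclideanSpace ℝ (Fin n) → ℂ}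
    (hf : ContDiff ℝ (⊤ : ℕ∞) f) : pdE i (pdE j f) = pdE j (pdE i f) := by
  have hd : Differentiable ℝ (fderiv ℝ f) :=
    (hf.fderiv_right (m := (⊤ : ℕ∞)) (by simp)).differentiable (by simp)
  have key : ∀ (i j : Fin n) x, pdE i (pdE j f) x =
      fderiv ℝ (fderiv ℝ f) x (EuclideanSpace.single i 1) (EuclideanSpace.single j 1) := by
    intro i j x
    unfold pdE
    rw [fderiv_clm_apply (hd x) (by fun_prop)]
    simp
  ext x
  rw [key, key]
  exact (hf.contDiffAt.isSymmSndFDerivAt 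
    (by simpa using WithTop.coe_le_coe.2 (le_top : (2 : ℕ∞) ≤ ⊤))).eq _ _

lemma pdE_iterate_comm {n : ℕ} (i j : Fin n) (k : ℕ) {f : EuclideanSpace ℝ (Fin n) → ℂ}
    (hf : ContDiff ℝ (⊤ : ℕ∞) f) : (pdE i)^[k] (pdE j f) = pdE j ((pdE i)^[k] f) := by
  induction k with
  | zero => rfl
  | succ k ih =>
    rw [Function.iterate_succ_apply', Function.iterate_succ_apply', ih,
      pdE_comm i j (contDiff_pdE_iterate i k hf)]

/-- The composition of the powers `∂_i ^ (b i)` for `i` in the list `l`; for `l` the list of all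
indices this is `∂^b`. -/
noncomputable def pdList {n : ℕ} (l : List (Fin n)) (b : Fin n → ℕ)
    (f : EuclideanSpace ℝ (Fin n) → ℂ) : EuclideanSpace ℝ (Fin n) → ℂ :=
  (l.foldr (fun i g => (pdE i)^[b i] ∘ g) id) f

lemma pdList_cons {n : ℕ} (i : Fin n) (l : List (Fin n)) (b : Fin n → ℕ)
    (f : EuclideanSpace ℝ (Fin n) → ℂ) :
    pdList (i :: l) b f = (pdE i)^[b i] (pdList l b f) := rfl

lemma contDiff_pdList {n : ℕ} (l : List (Fin n)) (b : Fin n → ℕ)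
    {f : EuclideanSpace ℝ (Fin n) → ℂ} (hf : ContDiff ℝ (⊤ : ℕ∞) f) :
    ContDiff ℝ (⊤ : ℕ∞) (pdList l b f) := by
  induction l with
  | nil => exact hf
  | cons i l ih => rw [pdList_cons]; exact contDiff_pdE_iterate i _ ih

lemma pdList_pdE_of_notMem {n : ℕ} (l : List (Fin n)) (b : Fin n → ℕ) (i : Fin n) (hi : i ∉ l)
    {f : EuclideanSpace ℝ (Fin n) → ℂ} (hf : ContDiff ℝ (⊤ : ℕ∞) f) :
    pdList l b (pdE i f) = pdE i (pdList l (b + Pi.single i 1) f) := by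
  induction l with
  | nil => rfl
  | cons j l ih =>
    simp only [List.mem_cons, not_or] at hi
    rw [pdList_cons, pdList_cons, ih hi.2, pdE_iterate_comm _ _ _ (contDiff_pdList _ _ hf)]
    simp [Pi.single_eq_of_ne (Ne.symm hi.1)]

lemma pdList_pdE_of_mem {n : ℕ} (l : List (Fin n)) (hl : l.Nodup) (b : Fin n → ℕ) (i : Fin n)
    (hi : i ∈ l) {f : EuclideanSpace ℝ (Fin n) → ℂ} (hf : ContDiff ℝ (⊤ : ℕ∞) f) :
    pdList l b (pdE i f) = pdList l (b + Pi.single i 1) f := by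
  induction l with
  | nil => simp at hi
  | cons j l ih =>
    rw [List.nodup_cons] at hl
    rw [pdList_cons, pdList_cons]
    by_cases hij : i = j
    · subst hij
      rw [pdList_pdE_of_notMem l b i hl.1 hf]
      simp [Function.iterate_succ_apply]
    · rw [ih hl.2 (by simpa [hij] using hi)]
      simp [Pi.single_eq_of_ne (Ne.symm hij)]

lemma mpdE_pdE {n : ℕ} (b : Fin n → ℕ) (i : Fin n) {f : EuclideanSpace ℝ (Fin n) → ℂ}
    (hf : ContDiff ℝ (⊤ : ℕ∞) f) : mpdE b (pdE i f) = mpdE (b + Pi.single i 1) f :=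
  pdList_pdE_of_mem _ (List.nodup_finRange n) b i (List.mem_finRange i) hf

lemma mpdE_zero {n : ℕ} (f : EuclideanSpace ℝ (Fin n) → ℂ) : mpdE 0 f = f := by
  have h : ∀ l : List (Fin n), pdList l 0 f = f := by
    intro l
    induction l with
    | nil => rfl
    | cons j l ih => rw [pdList_cons, ih]; rfl
  exact h _

lemma norm_iteratedFDeriv_pdE_le {n : ℕ} (i : Fin n) (k : ℕ)
    {f : EuclideanSpace ℝ (Fin n) → ℂ} (hf : ContDiff ℝ (⊤ : ℕ∞) f)
    (x : EuclideanSpace ℝ (Fin n)) :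
    ‖iteratedFDeriv ℝ k (pdE i f) x‖ ≤ ‖iteratedFDeriv ℝ (k + 1) f x‖ := by
  have h := norm_iteratedFDeriv_clm_apply_const (𝕜 := ℝ) (f := fderiv ℝ f)
    (c := EuclideanSpace.single i (1 : ℝ)) (x := x) (n := k)
    (hf.fderiv_right (m := (⊤ : ℕ∞)) (by simp)).contDiffAt (by exact_mod_cast le_top)
  rw [norm_iteratedFDeriv_fderiv] at h
  simpa using! h

lemma norm_iteratedFDeriv_pdE_iterate_le {n : ℕ} (i : Fin n) (k r : ℕ)
    {f : EuclideanSpace ℝ (Fin n) → ℂ} (hf : ContDiff ℝ (⊤ : ℕ∞) f)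
    (x : EuclideanSpace ℝ (Fin n)) :
    ‖iteratedFDeriv ℝ k ((pdE i)^[r] f) x‖ ≤ ‖iteratedFDeriv ℝ (k + r) f x‖ := by
  induction r generalizing k with
  | zero => rfl
  | succ r ih =>
    rw [Function.iterate_succ_apply']
    refine (norm_iteratedFDeriv_pdE_le i k (contDiff_pdE_iterate i r hf) x).trans ?_
    refine (ih (k + 1)).trans_eq ?_
    rw [show k + 1 + r = k + (r + 1) by ring]

lemma norm_mpdE_le {n : ℕ} (b : Fin n → ℕ) {f : EuclideanSpace ℝ (Fin n) → ℂ}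
    (hf : ContDiff ℝ (⊤ : ℕ∞) f) (x : EuclideanSpace ℝ (Fin n)) :
    ‖mpdE b f x‖ ≤ ‖iteratedFDeriv ℝ (∑ i, b i) f x‖ := by
  have h : ∀ (l : List (Fin n)) (k : ℕ), ‖iteratedFDeriv ℝ k (pdList l b f) x‖ ≤
      ‖iteratedFDeriv ℝ (k + (l.map b).sum) f x‖ := by
    intro l
    induction l with
    | nil => intro k; rfl
    | cons j l ih =>
      intro k
      rw [pdList_cons]
      refine (norm_iteratedFDeriv_pdE_iterate_le j k (b j) (contDiff_pdList l b hf) x).trans ?_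
      refine (ih _).trans_eq ?_
      rw [List.map_cons, List.sum_cons, add_assoc]
  have h0 := h (List.finRange n) 0
  rw [norm_iteratedFDeriv_zero, zero_add, ← List.ofFn_eq_map, List.sum_ofFn] at h0
  exact h0

/-- The differential is `∑ i, ∂_i f • dx_i`, so `k + 1` derivatives of `f` are controlled by `k`
derivatives of its first-order partial derivatives. -/
lemma norm_iteratedFDeriv_succ_le_sum {n : ℕ} (k : ℕ)
    {f : EuclideanSpace ℝ (Fin n) → ℂ} (hf : ContDiff ℝ (⊤ : ℕ∞) f)
    (x : EuclideanSpace ℝ (Fin n)) :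
    ‖iteratedFDeriv ℝ (k + 1) f x‖ ≤
      ∑ i, ‖ContinuousLinearMap.smulRightL ℝ (EuclideanSpace ℝ (Fin n)) ℂ
        (EuclideanSpace.proj i)‖ * ‖iteratedFDeriv ℝ k (pdE i f) x‖ := by
  have hdec : fderiv ℝ f = fun y => ∑ i, ContinuousLinearMap.smulRightL ℝ
      (EuclideanSpace ℝ (Fin n)) ℂ (EuclideanSpace.proj i) (pdE i f y) := by
    ext y v
    have hv : v = ∑ i, v i • EuclideanSpace.single i (1 : ℝ) := by
      ext j
      simp [Pi.single_apply]
    conv_lhs => rw [hv]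
    simp [pdE]
  have hc : ∀ i, ContDiff ℝ k (fun y => ContinuousLinearMap.smulRightL ℝ
      (EuclideanSpace ℝ (Fin n)) ℂ (EuclideanSpace.proj i) (pdE i f y)) := fun i =>
    (ContinuousLinearMap.contDiff _).comp
      ((contDiff_pdE i hf).of_le (by exact_mod_cast le_top))
  rw [← norm_iteratedFDeriv_fderiv, hdec, iteratedFDeriv_fun_sum_apply fun i _ => (hc i).contDiffAt]
  refine (norm_sum_le _ _).trans (Finset.sum_le_sum fun i _ => ?_)
  exact ContinuousLinearMap.norm_iteratedFDeriv_comp_left _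
    (contDiff_pdE i hf).contDiffAt (by exact_mod_cast le_top)

/-- Symbol estimates of order `s`, on the full Fréchet derivatives. -/
def SymBd {n : ℕ} {F : Type*} [NormedAddCommGroup F] [NormedSpace ℝ F] (s : ℝ)
    (f : EuclideanSpace ℝ (Fin n) → F) : Prop :=
  ∀ k : ℕ, ∃ C : ℝ, ∀ η, ‖iteratedFDeriv ℝ k f η‖ ≤ C * (1 + ‖η‖) ^ (s - (k : ℝ))

lemma symBd_of_mpdE {n : ℕ} {s : ℝ} {f : EuclideanSpace ℝ (Fin n) → ℂ}
    (hf : ContDiff ℝ (⊤ : ℕ∞) f)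
    (h : ∀ b : Fin n → ℕ, ∃ C : ℝ, ∀ η,
      ‖mpdE b f η‖ ≤ C * (1 + ‖η‖) ^ (s - (∑ i, b i : ℕ))) : SymBd s f := by
  intro k
  induction k generalizing f s with
  | zero =>
    obtain ⟨C, hC⟩ := h 0
    exact ⟨C, fun η => by simpa [mpdE_zero] using hC η⟩
  | succ k ih =>
    have hi : ∀ i, ∃ C : ℝ, ∀ η,
        ‖iteratedFDeriv ℝ k (pdE i f) η‖ ≤ C * (1 + ‖η‖) ^ (s - 1 - (k : ℝ)) := by
      intro i
      refine ih (contDiff_pdE i hf) fun b => ?_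
      obtain ⟨C, hC⟩ := h (b + Pi.single i 1)
      refine ⟨C, fun η => ?_⟩
      rw [mpdE_pdE b i hf]
      refine (hC η).trans_eq ?_
      have : ∑ j, (b + Pi.single i 1 : Fin n → ℕ) j = ∑ j, b j + 1 := by
        simp [Finset.sum_add_distrib]
      rw [this]
      push_cast
      congr 2
      ring
    choose C hC using hi
    refine ⟨∑ i, ‖ContinuousLinearMap.smulRightL ℝ (EuclideanSpace ℝ (Fin n)) ℂ
        (EuclideanSpace.proj i)‖ * C i, fun η => ?_⟩
    refine (norm_iteratedFDeriv_succ_le_sum k hf η).trans ?_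
    rw [Finset.sum_mul]
    refine Finset.sum_le_sum fun i _ => ?_
    rw [mul_assoc]
    refine mul_le_mul_of_nonneg_left ((hC i η).trans_eq ?_) (by positivity)
    push_cast
    congr 2
    ring

/-! ### Cutoffs and uniform symbol estimates -/

lemma SymBd.mono {n : ℕ} {F : Type*} [NormedAddCommGroup F] [NormedSpace ℝ F] {s t : ℝ}
    (hst : s ≤ t) {f : EuclideanSpace ℝ (Fin n) → F} (hf : SymBd s f) : SymBd t f := by
  intro k
  obtain ⟨C, hC⟩ := hf k
  have hC0 : 0 ≤ C := by simpa using (norm_nonneg _).trans (hC 0)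
  refine ⟨C, fun η => (hC η).trans ?_⟩
  have h1 : (1 : ℝ) ≤ 1 + ‖η‖ := by simp
  gcongr

lemma symBd_of_hasCompactSupport {n : ℕ} {F : Type*} [NormedAddCommGroup F] [NormedSpace ℝ F]
    (s : ℝ) {f : EuclideanSpace ℝ (Fin n) → F} (hf : ContDiff ℝ (⊤ : ℕ∞) f)
    (hc : HasCompactSupport f) : SymBd s f := by
  intro k
  have hcont : Continuous fun η : EuclideanSpace ℝ (Fin n) =>
      (1 + ‖η‖) ^ (-(s - (k : ℝ))) • iteratedFDeriv ℝ k f η := by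
    have h1 : Continuous (iteratedFDeriv ℝ k f) :=
      hf.continuous_iteratedFDeriv (by exact_mod_cast le_top)
    have h2 : Continuous fun η : EuclideanSpace ℝ (Fin n) => (1 + ‖η‖) ^ (-(s - (k : ℝ))) :=
      Continuous.rpow_const (by fun_prop) fun η => Or.inl (by positivity)
    exact h2.smul h1
  obtain ⟨C, hC⟩ := hcont.bounded_above_of_compact_support
    (HasCompactSupport.smul_left (f := fun η : EuclideanSpace ℝ (Fin n) =>
      (1 + ‖η‖) ^ (-(s - (k : ℝ)))) (hc.iteratedFDeriv (𝕜 := ℝ) k))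
  refine ⟨C, fun η => ?_⟩
  have hp : 0 < 1 + ‖η‖ := by positivity
  have h := hC η
  rw [norm_smul, Real.norm_of_nonneg (by positivity), Real.rpow_neg hp.le] at h
  rwa [inv_mul_le_iff₀ (by positivity), mul_comm] at h

lemma symBd_one_sub {n : ℕ} {f : EuclideanSpace ℝ (Fin n) → ℝ} (hf : ContDiff ℝ (⊤ : ℕ∞) f)
    (hc : HasCompactSupport f) : SymBd 0 (fun η => 1 - f η) := by
  intro k
  obtain ⟨C, hC⟩ := symBd_of_hasCompactSupport 0 hf hc k
  refine ⟨1 + C, fun η => ?_⟩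
  have hp : 0 ≤ (1 + ‖η‖) ^ (0 - (k : ℝ)) := by positivity
  have h1 : ‖iteratedFDeriv ℝ k (fun _ : EuclideanSpace ℝ (Fin n) => (1 : ℝ)) η‖ ≤
      (1 + ‖η‖) ^ (0 - (k : ℝ)) := by
    rcases Nat.eq_zero_or_pos k with rfl | hk
    · simp
    · rw [iteratedFDeriv_const_of_ne hk.ne']
      simpa using hp
  rw [fun_iteratedFDeriv_sub_apply contDiffAt_const (hf.contDiffAt.of_le (by exact_mod_cast le_top))]
  refine (norm_sub_le _ _).trans ?_
  linarith [hC η]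

/-- A family of excision functions, obtained by dilating a single one. Since `R + ‖η‖ ≥ 1 + ‖η‖`,
the dilates satisfy the symbol estimates of order `0` uniformly in `R ≥ 1`. -/
lemma exists_cutoff_s10 (n : ℕ) : ∃ χ : ℝ → EuclideanSpace ℝ (Fin n) → ℝ,
    (∀ R, ContDiff ℝ (⊤ : ℕ∞) (χ R)) ∧
    (∀ R, 1 ≤ R → ∀ η, ‖η‖ ≤ R → χ R η = 0) ∧
    (∀ R, 1 ≤ R → HasCompactSupport fun η => χ R η - 1) ∧
    ∀ k : ℕ, ∃ C : ℝ, ∀ R, 1 ≤ R → ∀ η,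
      ‖iteratedFDeriv ℝ k (χ R) η‖ ≤ C * (1 + ‖η‖) ^ (-(k : ℝ)) := by
  let φ : ContDiffBump (0 : EuclideanSpace ℝ (Fin n)) := ⟨1, 2, one_pos, one_lt_two⟩
  have hφ : ContDiff ℝ (⊤ : ℕ∞) φ := φ.contDiff
  have hψ : ContDiff ℝ (⊤ : ℕ∞) fun η => 1 - φ η := contDiff_const.sub hφ
  refine ⟨fun R η => 1 - φ (R⁻¹ • η), fun R => hψ.comp (contDiff_const_smul _), ?_, ?_, ?_⟩
  · intro R hR η hη
    have hR0 : 0 < R := by linarith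
    beta_reduce
    rw [φ.one_of_mem_closedBall, sub_self]
    rw [mem_closedBall_zero_iff, norm_smul, Real.norm_of_nonneg (by positivity)]
    exact (inv_mul_le_iff₀ hR0).2 (by simpa [φ] using hη)
  · intro R hR
    have hR0 : R⁻¹ ≠ 0 := inv_ne_zero (by linarith)
    have h := (φ.hasCompactSupport.comp_smul hR0).neg
    have he : (fun η => 1 - φ (R⁻¹ • η) - 1) = -fun η => φ (R⁻¹ • η) := by
      ext η
      simp
    beta_reduce
    rw [he]
    exact h
  · intro k
    obtain ⟨C, hC⟩ := symBd_one_sub hφ φ.hasCompactSupport k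
    have hC0 : 0 ≤ C := by simpa using (norm_nonneg _).trans (hC 0)
    refine ⟨C, fun R hR η => ?_⟩
    have hR0 : 0 < R := by linarith
    rw [iteratedFDeriv_comp_const_smul (f := fun η => 1 - φ η) R⁻¹
      (hψ.of_le (by exact_mod_cast le_top))]
    rw [norm_smul, Real.norm_of_nonneg (by positivity)]
    refine (mul_le_mul_of_nonneg_left (hC _) (by positivity)).trans ?_
    rw [zero_sub, Real.rpow_neg (by positivity), Real.rpow_neg (by positivity), Real.rpow_natCast,
      Real.rpow_natCast, norm_smul, Real.norm_of_nonneg (by positivity), mul_left_comm,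
      ← inv_pow, ← mul_pow, ← inv_pow]
    refine mul_le_mul_of_nonneg_left (pow_le_pow_left₀ (by positivity) ?_ k) hC0
    rw [← mul_inv]
    refine inv_anti₀ (by positivity) ?_
    rw [mul_add, mul_inv_cancel_left₀ hR0.ne']
    linarith

/-- Leibniz' rule: multiplying a symbol by the members of a bounded family of symbols of order `0`
gives a bounded family of symbols. -/
lemma exists_bound_smul {n : ℕ} {χ : ℝ → EuclideanSpace ℝ (Fin n) → ℝ}
    (hχ : ∀ R, ContDiff ℝ (⊤ : ℕ∞) (χ R))
    (hb : ∀ k : ℕ, ∃ C : ℝ, ∀ R, 1 ≤ R → ∀ η,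
      ‖iteratedFDeriv ℝ k (χ R) η‖ ≤ C * (1 + ‖η‖) ^ (-(k : ℝ)))
    {s : ℝ} {f : EuclideanSpace ℝ (Fin n) → ℂ} (hf : ContDiff ℝ (⊤ : ℕ∞) f) (hs : SymBd s f)
    (k : ℕ) : ∃ C : ℝ, 0 ≤ C ∧ ∀ R, 1 ≤ R → ∀ η,
      ‖iteratedFDeriv ℝ k (fun ξ => χ R ξ • f ξ) η‖ ≤ C * (1 + ‖η‖) ^ (s - (k : ℝ)) := by
  choose B hB using hb
  choose D hD using hs
  have key : ∀ R, 1 ≤ R → ∀ η, ‖iteratedFDeriv ℝ k (fun ξ => χ R ξ • f ξ) η‖ ≤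
      (∑ i ∈ Finset.range (k + 1), (k.choose i : ℝ) * B i * D (k - i)) *
        (1 + ‖η‖) ^ (s - (k : ℝ)) := by
    intro R hR η
    have hp : 0 < 1 + ‖η‖ := by positivity
    refine (norm_iteratedFDeriv_smul_le (hχ R) hf η (by exact_mod_cast le_top)).trans ?_
    rw [Finset.sum_mul]
    refine Finset.sum_le_sum fun i hi => ?_
    have hik : i ≤ k := by simpa [Nat.lt_succ_iff] using hi
    rw [mul_assoc]
    refine (mul_le_mul_of_nonneg_left (mul_le_mul (hB i R hR η) (hD (k - i) η) (norm_nonneg _)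
      ((norm_nonneg _).trans (hB i R hR η))) (Nat.cast_nonneg _)).trans_eq ?_
    have he : (1 + ‖η‖) ^ (s - (k : ℝ)) =
        (1 + ‖η‖) ^ (-(i : ℝ)) * (1 + ‖η‖) ^ (s - ((k - i : ℕ) : ℝ)) := by
      rw [← Real.rpow_add hp, Nat.cast_sub hik]
      congr 1
      ring
    rw [he]
    ring
  refine ⟨_, ?_, key⟩
  simpa using (norm_nonneg _).trans (key 1 le_rfl 0)

/-! ### The asymptotic sum -/

lemma exists_asymptotic_sum {n : ℕ} (m : ℝ) (a : ℕ → EuclideanSpace ℝ (Fin n) → ℂ)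
    (hsm : ∀ j, ContDiff ℝ (⊤ : ℕ∞) (a j)) (hsym : ∀ j : ℕ, SymBd (m - (j : ℝ)) (a j)) :
    ∃ A : EuclideanSpace ℝ (Fin n) → ℂ, ContDiff ℝ (⊤ : ℕ∞) A ∧
      ∀ N : ℕ, SymBd (m - (N : ℝ)) (fun ξ => A ξ - ∑ j ∈ Finset.range N, a j ξ) := by
  obtain ⟨χ, hχ, hχ0, hχc, hχb⟩ := exists_cutoff_s10 n
  choose C hC0 hC using fun j k => exists_bound_smul hχ hχb (hsm j) (hsym j) k
  -- The dilation parameters: `R j ≥ j` makes the sum locally finite, and `R j ≥ 2 ^ j * C j k` for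
  -- `k ≤ j` makes the tails small.
  let R : ℕ → ℝ := fun j => 1 + j + ∑ k ∈ Finset.range (j + 1), 2 ^ j * C j k
  have hS : ∀ j, 0 ≤ ∑ k ∈ Finset.range (j + 1), 2 ^ j * C j k := fun j =>
    Finset.sum_nonneg fun k _ => mul_nonneg (by positivity) (hC0 j k)
  have hR1 : ∀ j, 1 ≤ R j := fun j => by
    have := hS j
    have : (0 : ℝ) ≤ j := by positivity
    simp only [R]; linarith
  have hRj : ∀ j : ℕ, (j : ℝ) ≤ R j := fun j => by
    have := hS j
    simp only [R]; linarith
  have hRC : ∀ j k, k ≤ j → 2 ^ j * C j k ≤ R j := fun j k hk => by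
    have h := Finset.single_le_sum (f := fun k => 2 ^ j * C j k)
      (fun i _ => mul_nonneg (by positivity) (hC0 j i))
      (Finset.mem_range.2 (Nat.lt_succ_of_le hk))
    beta_reduce at h
    have : (0 : ℝ) ≤ j := by positivity
    simp only [R]; linarith
  let t : ℕ → EuclideanSpace ℝ (Fin n) → ℂ := fun j ξ => χ (R j) ξ • a j ξ
  have ht : ∀ j, ContDiff ℝ (⊤ : ℕ∞) (t j) := fun j => (hχ (R j)).smul (hsm j)
  let A : EuclideanSpace ℝ (Fin n) → ℂ := fun ξ => ∑' j, t j ξ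
  have hA : ∀ (η : EuclideanSpace ℝ (Fin n)) (J : ℕ), ‖η‖ < J →
      A =ᶠ[nhds η] fun ξ => ∑ j ∈ Finset.range J, t j ξ := by
    intro η J hJ
    filter_upwards [continuous_norm.continuousAt.eventually_lt_const hJ] with ξ hξ
    refine tsum_eq_sum fun j hj => ?_
    have hj' : (J : ℝ) ≤ j := by simpa using hj
    simp only [t]
    rw [hχ0 _ (hR1 j) ξ (by linarith [hRj j]), zero_smul]
  refine ⟨A, ?_, fun N k => ?_⟩
  · refine contDiff_iff_contDiffAt.2 fun η => ?_
    obtain ⟨J, hJ⟩ := exists_nat_gt ‖η‖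
    exact (ContDiff.sum fun j _ => ht j).contDiffAt.congr_of_eventuallyEq (hA η J hJ)
  have htail : ∀ j, N + 1 ≤ j → k ≤ j → ∀ η,
      ‖iteratedFDeriv ℝ k (t j) η‖ ≤ (1 / 2) ^ j * (1 + ‖η‖) ^ (m - (N : ℝ) - (k : ℝ)) := by
    intro j hNj hkj η
    have hp : 0 < 1 + ‖η‖ := by positivity
    rcases lt_or_ge ‖η‖ (R j) with hη | hη
    · have h0 : t j =ᶠ[nhds η] fun _ => 0 := by
        filter_upwards [continuous_norm.continuousAt.eventually_lt_const hη] with ξ hξ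
        simp only [t]
        rw [hχ0 _ (hR1 j) ξ hξ.le, zero_smul]
      rw [(h0.iteratedFDeriv ℝ k).eq_of_nhds]
      simp only [iteratedFDeriv_fun_zero, Pi.zero_apply, norm_zero]
      positivity
    · refine (hC j k (R j) (hR1 j) η).trans ?_
      have hc : C j k ≤ (1 / 2) ^ j * (1 + ‖η‖) := by
        rw [one_div, inv_pow, ← div_eq_inv_mul, le_div_iff₀ (by positivity), mul_comm]
        linarith [hRC j k hkj]
      have he : (1 + ‖η‖) ^ (m - (N : ℝ) - (k : ℝ)) =
          (1 + ‖η‖) * (1 + ‖η‖) ^ (m - (N : ℝ) - (k : ℝ) - 1) := by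
        conv_rhs => rw [mul_comm, ← Real.rpow_add_one hp.ne']
        congr 1
        ring
      have hle : (1 + ‖η‖) ^ (m - (j : ℝ) - (k : ℝ)) ≤
          (1 + ‖η‖) ^ (m - (N : ℝ) - (k : ℝ) - 1) := by
        refine Real.rpow_le_rpow_of_exponent_le (by simp) ?_
        have : (N : ℝ) + 1 ≤ j := by exact_mod_cast hNj
        linarith
      rw [he, ← mul_assoc]
      exact mul_le_mul hc hle (by positivity) (by positivity)
  let g : ℕ → EuclideanSpace ℝ (Fin n) → ℂ := fun j =>
    if j < N then fun ξ => (χ (R j) ξ - 1) • a j ξ else t j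
  have hgsm : ∀ j, ContDiff ℝ (⊤ : ℕ∞) (g j) := by
    intro j
    simp only [g]
    split_ifs
    · exact ((hχ (R j)).sub contDiff_const).smul (hsm j)
    · exact ht j
  have hg : ∀ j, ∃ D : ℝ, 0 ≤ D ∧ (max (N + 1) k ≤ j → D ≤ (1 / 2) ^ j) ∧ ∀ η,
      ‖iteratedFDeriv ℝ k (g j) η‖ ≤ D * (1 + ‖η‖) ^ (m - (N : ℝ) - (k : ℝ)) := by
    intro j
    by_cases hM : max (N + 1) k ≤ j
    · have hN : N + 1 ≤ j := (le_max_left _ _).trans hM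
      refine ⟨(1 / 2) ^ j, by positivity, fun _ => le_rfl, fun η => ?_⟩
      simp only [g, if_neg (show ¬ j < N by omega)]
      exact htail j hN ((le_max_right _ _).trans hM) η
    · have hb : SymBd (m - (N : ℝ)) (g j) := by
        by_cases hj : j < N
        · refine symBd_of_hasCompactSupport _ (hgsm j) ?_
          simp only [g, if_pos hj]
          exact (hχc (R j) (hR1 j)).smul_right
        · simp only [g, if_neg hj]
          have : (N : ℝ) ≤ j := by exact_mod_cast not_lt.1 hj
          exact SymBd.mono (s := m - j) (by linarith) fun k => ⟨C j k, hC j k (R j) (hR1 j)⟩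
      obtain ⟨D, hD⟩ := hb k
      exact ⟨D, by simpa using (norm_nonneg _).trans (hD 0), fun h => absurd h hM, hD⟩
  choose D hD0 hDM hD using hg
  have hsum : Summable D := by
    refine Summable.of_norm_bounded_eventually_nat summable_geometric_two ?_
    filter_upwards [Filter.eventually_ge_atTop (max (N + 1) k)] with j hj
    rw [Real.norm_of_nonneg (hD0 j)]
    exact hDM j hj
  refine ⟨∑' j, D j, fun η => ?_⟩
  obtain ⟨J₀, hJ₀⟩ := exists_nat_gt ‖η‖
  let J := N + J₀
  have hJ : ‖η‖ < (J : ℝ) := hJ₀.trans_le (by simp [J])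
  have hloc : (fun ξ => A ξ - ∑ j ∈ Finset.range N, a j ξ) =ᶠ[nhds η]
      fun ξ => ∑ j ∈ Finset.range J, g j ξ := by
    filter_upwards [hA η J hJ] with ξ hξ
    rw [hξ]
    simp only [J, Finset.sum_range_add]
    have h1 : ∑ j ∈ Finset.range N, g j ξ =
        ∑ j ∈ Finset.range N, t j ξ - ∑ j ∈ Finset.range N, a j ξ := by
      rw [← Finset.sum_sub_distrib]
      refine Finset.sum_congr rfl fun j hj => ?_
      simp only [g, if_pos (Finset.mem_range.1 hj), t, sub_smul, one_smul]
    have h2 : ∀ j, g (N + j) ξ = t (N + j) ξ := fun j => by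
      simp [g]
    simp only [h1, h2]
    ring
  rw [(hloc.iteratedFDeriv ℝ k).eq_of_nhds, iteratedFDeriv_fun_sum_apply fun j _ =>
    ((hgsm j).of_le (by exact_mod_cast le_top)).contDiffAt]
  refine (norm_sum_le _ _).trans ((Finset.sum_le_sum fun j _ => hD j η).trans ?_)
  rw [← Finset.sum_mul]
  exact mul_le_mul_of_nonneg_right (hsum.sum_le_tsum _ fun j _ => hD0 j) (by positivity)

theorem stmt10 {n : ℕ} (m : ℝ) (a : ℕ → EuclideanSpace ℝ (Fin n) → ℂ)
    (hsm : ∀ j, ContDiff ℝ (⊤ : ℕ∞) (a j))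
    (hsym : ∀ (j : ℕ) (b : Fin n → ℕ), ∃ C : ℝ, ∀ η,
      ‖mpdE b (a j) η‖ ≤ C * (1 + ‖η‖) ^ (m - (j : ℝ) - (∑ i, b i : ℕ))) :
    ∃ A : EuclideanSpace ℝ (Fin n) → ℂ, ContDiff ℝ (⊤ : ℕ∞) A ∧
      ∀ (N : ℕ) (b : Fin n → ℕ), ∃ C : ℝ, ∀ η,
        ‖mpdE b (fun ξ => A ξ - ∑ j ∈ Finset.range N, a j ξ) η‖ ≤
          C * (1 + ‖η‖) ^ (m - (N : ℝ) - (∑ i, b i : ℕ)) := by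
  obtain ⟨A, hA, hAN⟩ := exists_asymptotic_sum m a hsm
    fun j => symBd_of_mpdE (hsm j) (hsym j)
  refine ⟨A, hA, fun N b => ?_⟩
  obtain ⟨C, hC⟩ := hAN N (∑ i, b i)
  exact ⟨C, fun η => (norm_mpdE_le b (hA.sub (ContDiff.sum fun j _ => hsm j)) η).trans (hC η)⟩
end
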